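/- For every d ∈ ℤ_{≥0}: each of the operators T_k (1 ≤ k ≤ n−1), Y'_i, (Y'_i)^{−1} (1 ≤ i ≤ n) and e'_{ij} (1 ≤ i ≠ j ≤ n) maps the space P^{(d)} of homogeneous polynomials of total degree d into itself, and the only F-linear subspaces V ⊆ P^{(d)} invariant under all of these operators are V = {0} and V = P^{(d)}. -/

import Mathlib

noncomputable section

/-- The Laurent polynomial ring `R[X₁^{±1}, …, Xₙ^{±1}]` in `n` variables over `R`,
realised as the monoid algebra of the additive monoid `Fin n →₀ ℤ` of exponent vectors. -/
abbrev Laur (R : Type*) [CommRing R] (n : ℕ) : Type _ :=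
  AddMonoidAlgebra R (Fin n →₀ ℤ)

variable {R : Type*} [CommRing R] {n : ℕ}

/-- The monomial `c · X^a`. -/
def mono (a : Fin n →₀ ℤ) (c : R) : Laur R n := AddMonoidAlgebra.single a c

/-- The generator `X_i`. -/
def Xel (i : Fin n) : Laur R n := mono (Finsupp.single i 1) 1

/-- The element `X_i⁻¹`. -/
def XinvEl (i : Fin n) : Laur R n := mono (Finsupp.single i (-1)) 1

/-- Multiplication by a Laurent polynomial, as a linear endomorphism. -/
def mulOp (x : Laur R n) : Module.End R (Laur R n) := LinearMap.mulLeft R x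

/-- The operator of multiplication by `X_i`, with `ℕ`-indexing (`0`-based; junk value `1`
out of range). -/
def XOp (i : ℕ) : Module.End R (Laur R n) :=
  if h : i < n then mulOp (Xel ⟨i, h⟩) else 1

/-- The operator of multiplication by `X_i⁻¹`, with `ℕ`-indexing. -/
def XinvOp (i : ℕ) : Module.End R (Laur R n) :=
  if h : i < n then mulOp (XinvEl ⟨i, h⟩) else 1

/-- Ascending product `f s * f (s+1) * ⋯ * f (s+len-1)` (equal to `1` when `len = 0`). -/
def aF {M : Type*} [Monoid M] (f : ℕ → M) (s len : ℕ) : M :=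
  ((List.range' s len).map f).prod

/-- Descending product `f (s+len-1) * ⋯ * f (s+1) * f s` (equal to `1` when `len = 0`). -/
def dF {M : Type*} [Monoid M] (f : ℕ → M) (s len : ℕ) : M :=
  (((List.range' s len).map f).reverse).prod

/-- Integer power `u^z`, where `v` is a designated (two-sided) inverse of `u`. -/
def zpowOp {M : Type*} [Monoid M] (u v : M) (z : ℤ) : M :=
  if 0 ≤ z then u ^ z.toNat else v ^ (-z).toNat

/-- The subspace `P^{(d)} ⊆ L` of homogeneous polynomials of total degree `d`. -/
def degSub (F : Type*) [Field F] (n : ℕ) (d : ℕ) : Submodule F (Laur F n) :=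
  Submodule.span F
    {p | ∃ a : Fin n →₀ ℤ, (∀ i, 0 ≤ a i) ∧ (∑ i, a i) = (d : ℤ) ∧ p = mono a 1}

/-!
Everything is specialised at `τ = 1`, by means of the `(τ - 1)`-adic valuation of `ℂ(τ)`. There
`T_k` becomes the transposition `s_k`, so `Y'_i` becomes `X^a ↦ q^{a_i} X^a`, and `e'_{ij}` becomes
`X^a ↦ [a_j]_q X^{a + ε_i - ε_j}`, where the `q`-integer `[a_j]_q` vanishes only for `a_j = 0`.

Let `V ⊆ P^{(d)}` be nonzero and invariant. Distinct monomials have different `Y'`-eigenvalues, also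
in the residue field, so some element of `V` reduces to a single monomial. The `e'_{ij}` move it to
every monomial of degree `d`, and lifts of all these monomials are linearly independent, so that
`V = P^{(d)}` by dimension.

For the stability of `P^{(d)}` only the factor `X_n⁻¹` of `D'_n` matters. On polynomials
`T_k p ≡ τ s_k p` modulo `X_{k+1}` and `T_k⁻¹ p ≡ τ⁻¹ s_k p` modulo `X_k`. Hence `Y'_n p ≡ p`
modulo `X_n`, the same holds for `(Y'_n)⁻¹`, and `Y'_n p - (Y'_n)⁻¹ p` is divisible by `X_n`.
-/

section Products

variable {M N : Type*} [Monoid M] [Monoid N]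

theorem aF_zero (f : ℕ → M) (s : ℕ) : aF f s 0 = 1 := by
  simp [aF]

theorem aF_succ_left (f : ℕ → M) (s l : ℕ) : aF f s (l + 1) = f s * aF f (s + 1) l := by
  simp [aF, List.range'_succ]

theorem dF_zero (f : ℕ → M) (s : ℕ) : dF f s 0 = 1 := by
  simp [dF]

theorem dF_succ_left (f : ℕ → M) (s l : ℕ) : dF f s (l + 1) = dF f (s + 1) l * f s := by
  simp [dF, List.range'_succ]

theorem dF_inv {G : Type*} [Group G] (f : ℕ → G) (s l : ℕ) :
    dF (fun k => (f k)⁻¹) s l = (aF f s l)⁻¹ := by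
  simp [dF, aF, List.prod_inv_reverse, Function.comp_def]

theorem aF_rel {r : M → N → Prop} (one : r 1 1)
    (mul : ∀ {a b c d}, r a b → r c d → r (a * c) (b * d)) {f : ℕ → M} {g : ℕ → N} {l : ℕ} :
    ∀ {s : ℕ}, (∀ k, s ≤ k → k < s + l → r (f k) (g k)) → r (aF f s l) (aF g s l) := by
  induction l with
  | zero => intro s _; simpa only [aF_zero] using one
  | succ l ih =>
    intro s h
    rw [aF_succ_left, aF_succ_left]
    exact mul (h s le_rfl (by omega)) (ih fun k hk hk' => h k (by omega) (by omega))

theorem dF_rel {r : M → N → Prop} (one : r 1 1)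
    (mul : ∀ {a b c d}, r a b → r c d → r (a * c) (b * d)) {f : ℕ → M} {g : ℕ → N} {l : ℕ} :
    ∀ {s : ℕ}, (∀ k, s ≤ k → k < s + l → r (f k) (g k)) → r (dF f s l) (dF g s l) := by
  induction l with
  | zero => intro s _; simpa only [dF_zero] using one
  | succ l ih =>
    intro s h
    rw [dF_succ_left, dF_succ_left]
    exact mul (ih fun k hk hk' => h k (by omega) (by omega)) (h s le_rfl (by omega))

theorem aF_mem {S : Submonoid M} {f : ℕ → M} {s l : ℕ}
    (h : ∀ k, s ≤ k → k < s + l → f k ∈ S) : aF f s l ∈ S :=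
  aF_rel (N := Unit) (r := fun a _ => a ∈ S) (g := 1) S.one_mem S.mul_mem h

theorem dF_mem {S : Submonoid M} {f : ℕ → M} {s l : ℕ}
    (h : ∀ k, s ≤ k → k < s + l → f k ∈ S) : dF f s l ∈ S :=
  dF_rel (N := Unit) (r := fun a _ => a ∈ S) (g := 1) S.one_mem S.mul_mem h

end Products

section InvariantSubspaces

/-- The subalgebra of endomorphisms that map a given subspace into itself; membership of a product
or of a linear combination of operators is then automatic. -/
def invariantSubalgebra {K M : Type*} [CommSemiring K] [AddCommMonoid M] [Module K M]
    (U : Submodule K M) : Subalgebra K (Module.End K M) where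
  carrier := {A | ∀ p ∈ U, A p ∈ U}
  mul_mem' hA hB p hp := hA _ (hB p hp)
  add_mem' hA hB p hp := U.add_mem (hA p hp) (hB p hp)
  algebraMap_mem' c _ hp := U.smul_mem c hp

theorem mem_invariantSubalgebra_of_mul_eq_one {K M : Type*} [Field K] [AddCommGroup M]
    [Module K M] {U : Submodule K M} [FiniteDimensional K U] {A B : Module.End K M}
    (hBA : B * A = 1) (hA : A ∈ invariantSubalgebra U) :
    B ∈ invariantSubalgebra U := by
  have hB (x : M) : B (A x) = x := LinearMap.congr_fun hBA x
  have hinj : Function.Injective (A.restrict hA) := fun x y hxy =>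
    Subtype.ext (Function.LeftInverse.injective hB (congrArg Subtype.val hxy))
  intro p hp
  obtain ⟨x, hx⟩ := LinearMap.injective_iff_surjective.mp hinj ⟨p, hp⟩
  have hAx : A x = p := congrArg Subtype.val hx
  rw [← hAx, hB]
  exact x.2

end InvariantSubspaces

section MonomialOperators

variable {K α : Type*} [CommRing K]

/-- The monomial operator `X^a ↦ c a • X^(φ a)` on the free module on symbols `X^a`, `a : α`. -/
def monomialOp (φ : Equiv.Perm α) (c : α → K) : Module.End K (AddMonoidAlgebra K α) :=
  Finsupp.lsum K (fun a => c a • AddMonoidAlgebra.lsingle (φ a)) ∘ₗ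
    (AddMonoidAlgebra.coeffLinearEquiv K).toLinearMap

theorem monomialOp_single (φ : Equiv.Perm α) (c : α → K) (a : α) (r : K) :
    monomialOp φ c (AddMonoidAlgebra.single a r) = AddMonoidAlgebra.single (φ a) (c a * r) := by
  simp [monomialOp]

theorem eq_monomialOp {A : Module.End K (AddMonoidAlgebra K α)} {φ : Equiv.Perm α} {c : α → K}
    (h : ∀ a r, A (AddMonoidAlgebra.single a r) = AddMonoidAlgebra.single (φ a) (c a * r)) :
    A = monomialOp φ c :=
  AddMonoidAlgebra.lhom_ext' fun a => LinearMap.ext fun r => by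
    simp [h, monomialOp_single]

theorem coeff_monomialOp (φ : Equiv.Perm α) (c : α → K) (p : AddMonoidAlgebra K α) (a : α) :
    (monomialOp φ c p).coeff (φ a) = c a * p.coeff a := by
  classical
  induction p using AddMonoidAlgebra.induction_linear with
  | zero => simp
  | add f g hf hg => simp [hf, hg, mul_add]
  | single b r =>
    rw [monomialOp_single, AddMonoidAlgebra.coeff_single, AddMonoidAlgebra.coeff_single,
      Finsupp.single_apply, Finsupp.single_apply, φ.apply_eq_iff_eq]
    split_ifs with hab
    · rw [hab]
    · rw [mul_zero]

theorem monomialOp_one : monomialOp 1 1 = (1 : Module.End K (AddMonoidAlgebra K α)) :=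
  (eq_monomialOp fun a r => by simp).symm

theorem monomialOp_mul (φ ψ : Equiv.Perm α) (c d : α → K) :
    monomialOp φ c * monomialOp ψ d = monomialOp (φ * ψ) (fun a => c (ψ a) * d a) :=
  eq_monomialOp fun a r => by simp [monomialOp_single, mul_assoc]

theorem monomialOp_sub (φ : Equiv.Perm α) (c d : α → K) :
    monomialOp φ c - monomialOp φ d = monomialOp φ (c - d) :=
  eq_monomialOp fun a r => by
    simp [monomialOp_single, sub_mul, AddMonoidAlgebra.single_sub]

theorem smul_monomialOp (x : K) (φ : Equiv.Perm α) (c : α → K) :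
    x • monomialOp φ c = monomialOp φ (x • c) :=
  eq_monomialOp fun a r => by
    simp [monomialOp_single, mul_assoc, AddMonoidAlgebra.smul_single]

theorem monomialOp_mem_supported {φ : Equiv.Perm α} {S S' : Set α} (hφ : Set.MapsTo φ S S')
    (c : α → K) {p : AddMonoidAlgebra K α} (hp : p ∈ AddMonoidAlgebra.supported K K S) :
    monomialOp φ c p ∈ AddMonoidAlgebra.supported K K S' := by
  rw [AddMonoidAlgebra.mem_supported'] at hp ⊢
  intro a ha
  obtain ⟨b, rfl⟩ := φ.surjective a
  rw [coeff_monomialOp, hp b fun hb => ha (hφ hb), mul_zero]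

theorem finiteDimensional_supported {F : Type*} [Field F] {S : Set α} (hS : S.Finite) :
    FiniteDimensional F (AddMonoidAlgebra.supported F F S) :=
  have := hS.to_subtype
  Module.Finite.equiv (AddMonoidAlgebra.supportedEquivFinsupp S).symm

end MonomialOperators

section GaussLattices

variable {F Γ α : Type*} [Field F] [LinearOrderedCommGroupWithZero Γ] {v : Valuation F Γ}

/-- The lattice of elements with integral coefficients, i.e. the unit ball of the Gauss norm. -/
def gaussLE (v : Valuation F Γ) : AddSubgroup (AddMonoidAlgebra F α) where
  carrier := {p | ∀ a, v (p.coeff a) ≤ 1}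
  zero_mem' a := by simp
  add_mem' hp hq a := by simpa using v.map_add_le (hp a) (hq a)
  neg_mem' hp a := by simpa using hp a

/-- The elements whose coefficients lie in the maximal ideal, i.e. the open unit ball of the Gauss
norm; congruences modulo this subgroup express the reduction to the residue field. -/
def gaussLT (v : Valuation F Γ) : AddSubgroup (AddMonoidAlgebra F α) where
  carrier := {p | ∀ a, v (p.coeff a) < 1}
  zero_mem' a := by simp
  add_mem' hp hq a := by simpa using v.map_add_lt (hp a) (hq a)
  neg_mem' hp a := by simpa using hp a

theorem gaussLT_le_gaussLE : (gaussLT v : AddSubgroup (AddMonoidAlgebra F α)) ≤ gaussLE v :=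
  fun _ hp a => (hp a).le

theorem mem_gaussLE_of_sub_mem_gaussLT {p r : AddMonoidAlgebra F α} (h : p - r ∈ gaussLT v)
    (hr : r ∈ gaussLE v) : p ∈ gaussLE v := by
  simpa using add_mem (gaussLT_le_gaussLE h) hr

theorem smul_mem_gaussLE {c : F} (hc : v c ≤ 1) {p : AddMonoidAlgebra F α} (hp : p ∈ gaussLE v) :
    c • p ∈ gaussLE v := fun a => by
  simpa using mul_le_one' hc (hp a)

theorem smul_mem_gaussLT {c : F} (hc : v c ≤ 1) {p : AddMonoidAlgebra F α} (hp : p ∈ gaussLT v) :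
    c • p ∈ gaussLT v := fun a => by
  simpa using mul_lt_one_of_nonneg_of_lt_one_right hc zero_le (hp a)

theorem smul_mem_gaussLT_of_lt_one {c : F} (hc : v c < 1) {p : AddMonoidAlgebra F α}
    (hp : p ∈ gaussLE v) : c • p ∈ gaussLT v := fun a => by
  simpa using mul_lt_one_of_nonneg_of_lt_one_left zero_le hc (hp a)

theorem single_mem_gaussLE (a : α) : AddMonoidAlgebra.single a 1 ∈ gaussLE v := fun b => by
  classical
  rw [AddMonoidAlgebra.coeff_single, Finsupp.single_apply]
  split_ifs <;> simp

theorem exists_smul_mem_gaussLE (v : Valuation F Γ) {p : AddMonoidAlgebra F α} (hp : p ≠ 0) :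
    ∃ c : F, c ≠ 0 ∧ c • p ∈ gaussLE v ∧ c • p ∉ gaussLT v := by
  obtain ⟨a, ha, hmax⟩ := Finset.exists_max_image p.coeff.support (fun a => v (p.coeff a))
    (Finsupp.support_nonempty_iff.mpr (by simpa using hp))
  have ha0 : p.coeff a ≠ 0 := Finsupp.mem_support_iff.mp ha
  refine ⟨(p.coeff a)⁻¹, inv_ne_zero ha0, fun b => ?_, fun h => ?_⟩
  · have hb : v (p.coeff b) ≤ v (p.coeff a) := by
      by_cases hb0 : p.coeff b = 0
      · simp [hb0]
      · exact hmax b (Finsupp.mem_support_iff.mpr hb0)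
    simpa [mul_comm, ← div_eq_mul_inv] using div_le_one_of_le₀ hb zero_le
  · simpa [ha0] using h a

theorem map_mem_gaussLT {B : Module.End F (AddMonoidAlgebra F α)}
    (hB : ∀ p ∈ gaussLE v, B p ∈ gaussLE v) {p : AddMonoidAlgebra F α} (hp : p ∈ gaussLT v) :
    B p ∈ gaussLT v := by
  by_cases hp0 : p = 0
  · rw [hp0, map_zero]
    exact zero_mem _
  obtain ⟨c, hc0, hcLE, hcLT⟩ := exists_smul_mem_gaussLE v hp0
  have hc : 1 < v c := lt_of_not_ge fun hc => hcLT (smul_mem_gaussLT hc hp)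
  have hc' : v c⁻¹ < 1 := by
    rw [map_inv₀]
    exact inv_lt_one_of_one_lt₀ hc
  have hBp : B p = c⁻¹ • B (c • p) := by rw [map_smul, inv_smul_smul₀ hc0]
  rw [hBp]
  exact smul_mem_gaussLT_of_lt_one hc' (hB _ hcLE)

theorem map_mem_gaussLT_of_forall_single {C : Module.End F (AddMonoidAlgebra F α)}
    (hC : ∀ a, C (AddMonoidAlgebra.single a 1) ∈ gaussLT v) {p : AddMonoidAlgebra F α}
    (hp : p ∈ gaussLE v) : C p ∈ gaussLT v := by
  rw [← AddMonoidAlgebra.sum_coeff_single p, Finsupp.sum, map_sum]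
  refine sum_mem fun a _ => ?_
  rw [← mul_one (p.coeff a), ← smul_eq_mul, ← AddMonoidAlgebra.smul_single, map_smul]
  exact smul_mem_gaussLT (hp a) (hC a)

/-- `A` specializes to `B` for the valuation `v`: both preserve the integral elements, and they
induce the same operator on the reductions of those. The specialization is represented by an
operator `B` over `F` itself, so that no residue field is needed. -/
structure SpecializesTo (v : Valuation F Γ) (A B : Module.End F (AddMonoidAlgebra F α)) :
    Prop where
  map_right : ∀ p ∈ gaussLE v, B p ∈ gaussLE v
  sub_mem_gaussLT : ∀ p ∈ gaussLE v, A p - B p ∈ gaussLT v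

namespace SpecializesTo

variable {A A' B B' : Module.End F (AddMonoidAlgebra F α)}

theorem map_left (h : SpecializesTo v A B) {p : AddMonoidAlgebra F α} (hp : p ∈ gaussLE v) :
    A p ∈ gaussLE v :=
  mem_gaussLE_of_sub_mem_gaussLT (h.sub_mem_gaussLT p hp) (h.map_right p hp)

theorem one : SpecializesTo v (1 : Module.End F (AddMonoidAlgebra F α)) 1 where
  map_right _ hp := hp
  sub_mem_gaussLT p _ := by simp [zero_mem]

theorem mul (h : SpecializesTo v A B) (h' : SpecializesTo v A' B') :
    SpecializesTo v (A * A') (B * B') where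
  map_right p hp := h.map_right _ (h'.map_right p hp)
  sub_mem_gaussLT p hp := by
    simpa using add_mem (h.sub_mem_gaussLT _ (h'.map_left hp))
      (map_mem_gaussLT h.map_right (h'.sub_mem_gaussLT p hp))

theorem sub (h : SpecializesTo v A B) (h' : SpecializesTo v A' B') :
    SpecializesTo v (A - A') (B - B') where
  map_right p hp := sub_mem (h.map_right p hp) (h'.map_right p hp)
  sub_mem_gaussLT p hp := by
    rw [LinearMap.sub_apply, LinearMap.sub_apply, sub_sub_sub_comm]
    exact sub_mem (h.sub_mem_gaussLT p hp) (h'.sub_mem_gaussLT p hp)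

theorem smul {x : F} (hx : v x ≤ 1) (h : SpecializesTo v A B) :
    SpecializesTo v (x • A) (x • B) where
  map_right p hp := smul_mem_gaussLE hx (h.map_right p hp)
  sub_mem_gaussLT p hp := by
    simpa [smul_sub] using smul_mem_gaussLT hx (h.sub_mem_gaussLT p hp)

theorem smul_left {x : F} (hx : v (x - 1) < 1) (h : SpecializesTo v A B) :
    SpecializesTo v (x • A) B where
  map_right := h.map_right
  sub_mem_gaussLT p hp := by
    have hsub : (x • A) p - B p = (x - 1) • A p + (A p - B p) := by
      rw [LinearMap.smul_apply, sub_smul, one_smul, sub_add_sub_cancel]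
    rw [hsub]
    exact add_mem (smul_mem_gaussLT_of_lt_one hx (h.map_left hp)) (h.sub_mem_gaussLT p hp)

theorem notMem_gaussLT (h : SpecializesTo v A B) (hB'B : B' * B = 1)
    (hB' : ∀ p ∈ gaussLE v, B' p ∈ gaussLE v) {p : AddMonoidAlgebra F α} (hp : p ∈ gaussLE v)
    (hpLT : p ∉ gaussLT v) : A p ∉ gaussLT v := by
  intro hAp
  have hBp : B p ∈ gaussLT v := by simpa using sub_mem hAp (h.sub_mem_gaussLT p hp)
  have hB'Bp : B' (B p) = p := LinearMap.congr_fun hB'B p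
  exact hpLT (hB'Bp ▸ map_mem_gaussLT hB' hBp)

theorem inverse (h : SpecializesTo v A B) (hAA' : A * A' = 1) (hB'B : B' * B = 1)
    (hB' : ∀ p ∈ gaussLE v, B' p ∈ gaussLE v) : SpecializesTo v A' B' := by
  have hA (p : AddMonoidAlgebra F α) : A (A' p) = p := LinearMap.congr_fun hAA' p
  have hB (p : AddMonoidAlgebra F α) : B' (B p) = p := LinearMap.congr_fun hB'B p
  have hA' : ∀ p ∈ gaussLE v, A' p ∈ gaussLE v := by
    intro p hp
    by_cases h0 : A' p = 0
    · rw [h0]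
      exact zero_mem _
    obtain ⟨c, hc0, hcLE, hcLT⟩ := exists_smul_mem_gaussLE v h0
    have hc : 1 ≤ v c := by
      by_contra! hc
      refine h.notMem_gaussLT hB'B hB' hcLE hcLT ?_
      rw [map_smul, hA]
      exact smul_mem_gaussLT_of_lt_one hc hp
    rw [← inv_smul_smul₀ hc0 (A' p)]
    refine smul_mem_gaussLE ?_ hcLE
    rw [map_inv₀]
    exact inv_le_one_of_one_le₀ hc
  refine ⟨hB', fun p hp => ?_⟩
  have hsub : A' p - B' p = -B' (A (A' p) - B (A' p)) := by rw [map_sub, hA, hB, neg_sub]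
  rw [hsub]
  exact neg_mem (map_mem_gaussLT hB' (h.sub_mem_gaussLT _ (hA' p hp)))

theorem injective (h : SpecializesTo v A 1) : Function.Injective A := by
  rw [injective_iff_map_eq_zero]
  intro p hp
  by_contra hp0
  obtain ⟨c, -, hcLE, hcLT⟩ := exists_smul_mem_gaussLE v hp0
  refine h.notMem_gaussLT (mul_one 1) (fun _ => id) hcLE hcLT ?_
  rw [map_smul, hp, smul_zero]
  exact zero_mem _

theorem symbol_le_one {φ : Equiv.Perm α} {c : α → F} (h : SpecializesTo v A (monomialOp φ c))
    (a : α) : v (c a) ≤ 1 := by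
  simpa [monomialOp_single] using h.map_right _ (single_mem_gaussLE a) (φ a)

end SpecializesTo

theorem monomialOp_mem_gaussLE (φ : Equiv.Perm α) {c : α → F} (hc : ∀ a, v (c a) ≤ 1)
    {p : AddMonoidAlgebra F α} (hp : p ∈ gaussLE v) : monomialOp φ c p ∈ gaussLE v := fun a => by
  obtain ⟨b, rfl⟩ := φ.surjective a
  rw [coeff_monomialOp, map_mul]
  exact mul_le_one' (hc b) (hp b)

theorem specializesTo_monomialOp_self (φ : Equiv.Perm α) {c : α → F} (hc : ∀ a, v (c a) ≤ 1) :
    SpecializesTo v (monomialOp φ c) (monomialOp φ c) where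
  map_right _ hp := monomialOp_mem_gaussLE φ hc hp
  sub_mem_gaussLT p _ := by simp [zero_mem]

end GaussLattices

section IrreducibilityCriterion

variable {F Γ α : Type*} [Field F] [LinearOrderedCommGroupWithZero Γ] {v : Valuation F Γ}

/-- The reduction of the lattice of integral elements of `V` contains the monomial `X^a`. -/
def ReducesToMonomial (v : Valuation F Γ) (V : Submodule F (AddMonoidAlgebra F α)) (a : α) : Prop :=
  ∃ p ∈ V, p - AddMonoidAlgebra.single a 1 ∈ gaussLT v

theorem ReducesToMonomial.mem_of_le_supported {V : Submodule F (AddMonoidAlgebra F α)} {S : Set α}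
    (hV : V ≤ AddMonoidAlgebra.supported F F S) {a : α} (h : ReducesToMonomial v V a) : a ∈ S := by
  obtain ⟨p, hp, hpa⟩ := h
  by_contra ha
  simpa [AddMonoidAlgebra.mem_supported'.mp (hV hp) a ha] using hpa a

theorem ReducesToMonomial.move {V : Submodule F (AddMonoidAlgebra F α)} {a : α}
    (h : ReducesToMonomial v V a) {A : Module.End F (AddMonoidAlgebra F α)} {φ : Equiv.Perm α}
    {c : α → F} (hA : SpecializesTo v A (monomialOp φ c)) (hAV : ∀ p ∈ V, A p ∈ V)
    (hc : v (c a) = 1) : ReducesToMonomial v V (φ a) := by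
  obtain ⟨p, hp, hpa⟩ := h
  have hpLE : p ∈ gaussLE v := mem_gaussLE_of_sub_mem_gaussLT hpa (single_mem_gaussLE a)
  have hca : c a ≠ 0 := fun h0 => by simp [h0] at hc
  refine ⟨(c a)⁻¹ • A p, V.smul_mem _ (hAV p hp), ?_⟩
  have hsub : (c a)⁻¹ • A p - AddMonoidAlgebra.single (φ a) 1 =
      (c a)⁻¹ • ((A p - monomialOp φ c p) +
        monomialOp φ c (p - AddMonoidAlgebra.single a 1)) := by
    simp [monomialOp_single, smul_sub, AddMonoidAlgebra.smul_single, hca]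
  rw [hsub]
  exact smul_mem_gaussLT (by simp [hc])
    (add_mem (hA.sub_mem_gaussLT p hpLE) (map_mem_gaussLT hA.map_right hpa))

/-- The support of the reduction of an integral element. -/
def unitSupport (v : Valuation F Γ) (p : AddMonoidAlgebra F α) : Finset α :=
  open scoped Classical in {a ∈ p.coeff.support | v (p.coeff a) = 1}

theorem mem_unitSupport {p : AddMonoidAlgebra F α} {a : α} :
    a ∈ unitSupport v p ↔ v (p.coeff a) = 1 := by
  simp only [unitSupport, Finset.mem_filter, Finsupp.mem_support_iff, and_iff_right_iff_imp]
  intro h h0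
  simp [h0] at h

theorem unitSupport_nonempty {p : AddMonoidAlgebra F α} (hp : p ∈ gaussLE v)
    (hpLT : p ∉ gaussLT v) : (unitSupport v p).Nonempty := by
  obtain ⟨a, ha⟩ := not_forall.mp hpLT
  exact ⟨a, mem_unitSupport.mpr ((hp a).antisymm (not_lt.mp ha))⟩

theorem unitSupport_eq_of_sub_mem_gaussLT {p r : AddMonoidAlgebra F α}
    (h : p - r ∈ gaussLT v) : unitSupport v p = unitSupport v r := by
  ext a
  have ha : v (p.coeff a - r.coeff a) < 1 := by simpa using h a
  rw [mem_unitSupport, mem_unitSupport]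
  constructor <;> intro hu
  · rw [← hu, Valuation.map_sub_swap] at ha
    rw [v.map_eq_of_sub_lt ha, hu]
  · rw [← hu] at ha
    rw [v.map_eq_of_sub_lt ha, hu]

theorem reducesToMonomial_of_unitSupport_subset {V : Submodule F (AddMonoidAlgebra F α)}
    {p : AddMonoidAlgebra F α} (hp : p ∈ V) (hpLE : p ∈ gaussLE v) {a : α}
    (ha : a ∈ unitSupport v p) (hsub : unitSupport v p ⊆ {a}) : ReducesToMonomial v V a := by
  classical
  have ha1 : v (p.coeff a) = 1 := mem_unitSupport.mp ha
  have ha0 : p.coeff a ≠ 0 := fun h0 => by simp [h0] at ha1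
  refine ⟨(p.coeff a)⁻¹ • p, V.smul_mem _ hp, fun b => ?_⟩
  by_cases hb : b = a
  · simp [hb, ha0]
  · have hb1 : v (p.coeff b) ≠ 1 := fun h =>
      hb (Finset.mem_singleton.mp (hsub (mem_unitSupport.mpr h)))
    simpa [AddMonoidAlgebra.coeff_single, Finsupp.single_apply, Ne.symm hb, ha1]
      using lt_of_le_of_ne (hpLE b) hb1

theorem unitSupport_sub_smul {A : Module.End F (AddMonoidAlgebra F α)} {χ : α → F}
    (hA : SpecializesTo v A (monomialOp 1 χ)) {p : AddMonoidAlgebra F α} (hp : p ∈ gaussLE v)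
    (a : α) : unitSupport v (A p - χ a • p) =
      open scoped Classical in {b ∈ unitSupport v p | v (χ b - χ a) = 1} := by
  have hred : (A p - χ a • p) - monomialOp 1 (fun b => χ b - χ a) p ∈ gaussLT v := by
    have hop : monomialOp 1 (fun b => χ b - χ a) = monomialOp 1 χ - χ a • 1 := by
      rw [← monomialOp_one, smul_monomialOp, monomialOp_sub]
      congr 1
      ext b
      simp
    simpa [hop] using hA.sub_mem_gaussLT p hp
  rw [unitSupport_eq_of_sub_mem_gaussLT hred]
  ext b
  have hb := coeff_monomialOp 1 (fun b => χ b - χ a) p b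
  rw [Equiv.Perm.one_apply] at hb
  rw [Finset.mem_filter, mem_unitSupport, mem_unitSupport, hb, map_mul, mul_comm]
  have hχ : v (χ b - χ a) ≤ 1 := v.map_sub_le (hA.symbol_le_one b) (hA.symbol_le_one a)
  refine ⟨fun h => ?_, fun h => by rw [h.1, h.2, mul_one]⟩
  have hpb : v (p.coeff b) = 1 := (hp b).antisymm (h.ge.trans (mul_le_of_le_one_right' hχ))
  exact ⟨hpb, by rwa [hpb, one_mul] at h⟩

theorem exists_reducesToMonomial {ι : Type*} {V : Submodule F (AddMonoidAlgebra F α)}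
    {Y : ι → Module.End F (AddMonoidAlgebra F α)} {χ : ι → α → F}
    (hY : ∀ i, SpecializesTo v (Y i) (monomialOp 1 (χ i)))
    (hsep : ∀ a b, a ≠ b → ∃ i, v (χ i a - χ i b) = 1) (hYV : ∀ i, ∀ p ∈ V, Y i p ∈ V)
    (hV : V ≠ ⊥) : ∃ a, ReducesToMonomial v V a := by
  classical
  have hne : ∃ p, p ∈ V ∧ p ∈ gaussLE v ∧ p ∉ gaussLT v := by
    obtain ⟨p, hp, hp0⟩ := Submodule.exists_mem_ne_zero_of_ne_bot hV
    obtain ⟨c, -, hcLE, hcLT⟩ := exists_smul_mem_gaussLE v hp0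
    exact ⟨c • p, V.smul_mem c hp, hcLE, hcLT⟩
  obtain ⟨p, ⟨hp, hpLE, hpLT⟩, hmin⟩ :=
    exists_minimalFor_of_wellFoundedLT _ (fun p => (unitSupport v p).card) hne
  obtain ⟨a, ha⟩ := unitSupport_nonempty hpLE hpLT
  refine ⟨a, reducesToMonomial_of_unitSupport_subset hp hpLE ha fun b hb => ?_⟩
  by_contra hba
  obtain ⟨i, hi⟩ := hsep b a (by simpa using hba)
  -- This eigenvalue difference kills `a` in the reduction but keeps `b`.
  set r := Y i p - χ i a • p with hr
  have hrV : r ∈ V := V.sub_mem (hYV i p hp) (V.smul_mem _ hp)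
  have hrLE : r ∈ gaussLE v :=
    sub_mem ((hY i).map_left hpLE) (smul_mem_gaussLE ((hY i).symbol_le_one a) hpLE)
  have hrsupp := unitSupport_sub_smul (hY i) hpLE a
  have hbr : b ∈ unitSupport v r := by
    rw [hr, hrsupp]
    exact Finset.mem_filter.mpr ⟨hb, hi⟩
  have har : a ∉ unitSupport v r := by
    simp [hr, hrsupp]
  have hrLT : r ∉ gaussLT v := fun h => (h b).ne (mem_unitSupport.mp hbr)
  have hlt : (unitSupport v r).card < (unitSupport v p).card := by
    refine Finset.card_lt_card ((Finset.ssubset_iff_of_subset ?_).mpr ⟨a, ha, har⟩)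
    rw [hr, hrsupp]
    exact Finset.filter_subset _ _
  exact hlt.not_ge (hmin ⟨hrV, hrLE, hrLT⟩ hlt.le)

theorem eq_supported_of_reducesToMonomial {V : Submodule F (AddMonoidAlgebra F α)} {S : Set α}
    (hS : S.Finite) (hV : V ≤ AddMonoidAlgebra.supported F F S)
    (h : ∀ a ∈ S, ReducesToMonomial v V a) : V = AddMonoidAlgebra.supported F F S := by
  classical
  choose! f hfV hf using h
  -- `Φ` sends `X^a` to a lift of it in `V` for `a ∈ S`, and to itself otherwise.
  let Φ : Module.End F (AddMonoidAlgebra F α) :=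
    Finsupp.linearCombination F (fun a => if a ∈ S then f a else AddMonoidAlgebra.single a 1) ∘ₗ
      (AddMonoidAlgebra.coeffLinearEquiv F).toLinearMap
  have hΦ (a : α) : Φ (AddMonoidAlgebra.single a 1) =
      if a ∈ S then f a else AddMonoidAlgebra.single a 1 := by
    simp [Φ]
  have hΦ1 : SpecializesTo v Φ 1 := by
    refine ⟨fun _ => id, fun p hp => map_mem_gaussLT_of_forall_single (C := Φ - 1) (fun a => ?_) hp⟩
    rw [LinearMap.sub_apply, hΦ]
    split_ifs with ha
    · exact hf a ha
    · simp [zero_mem]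
  have hle : (AddMonoidAlgebra.supported F F S).map Φ ≤ V := by
    rw [AddMonoidAlgebra.supported_eq_span_single, Submodule.map_span, Submodule.span_le]
    rintro _ ⟨_, ⟨a, ha, rfl⟩, rfl⟩
    simpa [hΦ, ha] using hfV a ha
  have := finiteDimensional_supported (F := F) hS
  have := Submodule.finiteDimensional_of_le hV
  refine Submodule.eq_of_le_of_finrank_le hV ?_
  rw [(Submodule.equivMapOfInjective Φ hΦ1.injective _).finrank_eq]
  exact Submodule.finrank_mono hle

end IrreducibilityCriterion

section Exponents

/-- The action of the symmetric group on exponent vectors for which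
`permExp w a (w i) = a i`. -/
def permExp : Equiv.Perm (Fin n) →* Equiv.Perm (Fin n →₀ ℤ) where
  toFun w :=
    { toFun := Finsupp.equivMapDomain w
      invFun := Finsupp.equivMapDomain w.symm
      left_inv := fun a => by ext i; simp
      right_inv := fun a => by ext i; simp }
  map_one' := by ext a i; rfl
  map_mul' w w' := by ext a i; rfl

theorem permExp_apply_apply (w : Equiv.Perm (Fin n)) (a : Fin n →₀ ℤ) (i : Fin n) :
    permExp w a (w i) = a i :=
  congrArg a (w.symm_apply_apply i)

theorem permExp_add_single (w : Equiv.Perm (Fin n)) (a : Fin n →₀ ℤ) (i : Fin n) (x : ℤ) :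
    permExp w (a + Finsupp.single i x) = permExp w a + Finsupp.single (w i) x := by
  ext j
  obtain ⟨j, rfl⟩ := w.surjective j
  simp [permExp_apply_apply, Finsupp.single_apply, w.apply_eq_iff_eq]

/-- The exponents of the monomials of total degree `z` in the polynomial ring. The degree is an
integer so that it can be lowered freely; there are no such exponents if `z < 0`. -/
def polyExps (n : ℕ) (z : ℤ) : Set (Fin n →₀ ℤ) :=
  {a | (∀ i, 0 ≤ a i) ∧ ∑ i, a i = z}

/-- The exponents of the monomials of total degree `z` that are divisible by `X_i`. -/
def polyExpsDvd (z : ℤ) (i : Fin n) : Set (Fin n →₀ ℤ) :=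
  {a | a ∈ polyExps n z ∧ 0 < a i}

theorem finite_polyExps (n : ℕ) (z : ℤ) : (polyExps n z).Finite := by
  refine Set.Finite.of_injOn (f := fun a : Fin n →₀ ℤ => (a : Fin n → ℤ)) ?_
    DFunLike.coe_injective.injOn (Set.finite_Icc 0 fun _ => z)
  rintro a ⟨ha, rfl⟩
  exact ⟨ha, fun i => Finset.single_le_sum (f := a) (fun j _ => ha j) (Finset.mem_univ i)⟩

theorem mapsTo_permExp_polyExps (w : Equiv.Perm (Fin n)) (z : ℤ) :
    Set.MapsTo (permExp w) (polyExps n z) (polyExps n z) := by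
  rintro a ⟨ha, rfl⟩
  exact ⟨fun i => ha _, w.symm.sum_comp a⟩

theorem mapsTo_permExp_polyExpsDvd (w : Equiv.Perm (Fin n)) (z : ℤ) (i : Fin n) :
    Set.MapsTo (permExp w) (polyExpsDvd z i) (polyExpsDvd z (w i)) := fun a ha =>
  ⟨mapsTo_permExp_polyExps w z ha.1, by simpa only [permExp_apply_apply] using ha.2⟩

theorem mapsTo_add_single_polyExps (z : ℤ) (i : Fin n) :
    Set.MapsTo (Equiv.addRight (Finsupp.single i 1)) (polyExps n z) (polyExps n (z + 1)) := by
  rintro a ⟨ha, rfl⟩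
  refine ⟨fun j => ?_, by simp [Finset.sum_add_distrib, Finsupp.single_apply]⟩
  simp only [Equiv.coe_addRight, Finsupp.add_apply, Finsupp.single_apply]
  split_ifs <;> linarith [ha j]

theorem mapsTo_add_single_neg_polyExps (z : ℤ) (i : Fin n) :
    Set.MapsTo (Equiv.addRight (Finsupp.single i (-1))) (polyExpsDvd z i)
      (polyExps n (z - 1)) := by
  rintro a ⟨⟨ha, rfl⟩, hai⟩
  refine ⟨fun j => ?_, by simp [Finsupp.single_apply, ← sub_eq_add_neg]⟩
  simp only [Equiv.coe_addRight, Finsupp.add_apply, Finsupp.single_apply]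
  split_ifs with hij
  · subst hij
    omega
  · simpa using ha j

theorem sum_natAbs_sub_lt_of_transfer {a b : Fin n →₀ ℤ} {i j : Fin n} (hij : i ≠ j)
    (hi : a i < b i) (hj : b j < a j) :
    ∑ k, ((a + Finsupp.single j (-1) + Finsupp.single i 1 : Fin n →₀ ℤ) k - b k).natAbs <
      ∑ k, (a k - b k).natAbs := by
  refine Finset.sum_lt_sum (fun k _ => ?_) ⟨i, Finset.mem_univ i, ?_⟩
  · simp only [Finsupp.add_apply, Finsupp.single_apply]
    split_ifs with hjk hik hik <;> subst_vars <;> first | contradiction | omega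
  · simp only [Finsupp.add_apply, Finsupp.single_apply, if_neg hij.symm]
    simp only [if_true]
    omega

theorem polyExps_connected {z : ℤ} {P : (Fin n →₀ ℤ) → Prop}
    (transfer : ∀ a, P a → ∀ i j, i ≠ j → 0 < a j →
      P (a + Finsupp.single j (-1) + Finsupp.single i 1)) {a b : Fin n →₀ ℤ}
    (ha : a ∈ polyExps n z) (hb : b ∈ polyExps n z) (hPa : P a) : P b := by
  induction hm : ∑ k, (a k - b k).natAbs using Nat.strong_induction_on generalizing a with
  | _ m ih =>
    by_cases hab : a = b
    · exact hab ▸ hPa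
    obtain ⟨k, hk⟩ : ∃ k, a k ≠ b k := by
      simpa [Finsupp.ext_iff] using hab
    obtain ⟨j, -, hj⟩ := Finset.exists_pos_of_sum_zero_of_exists_nonzero (fun k => a k - b k)
      (by rw [Finset.sum_sub_distrib, ha.2, hb.2, sub_self])
      ⟨k, Finset.mem_univ k, sub_ne_zero.mpr hk⟩
    obtain ⟨i, -, hi⟩ := Finset.exists_pos_of_sum_zero_of_exists_nonzero (fun k => b k - a k)
      (by rw [Finset.sum_sub_distrib, ha.2, hb.2, sub_self])
      ⟨k, Finset.mem_univ k, sub_ne_zero.mpr hk.symm⟩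
    have hij : i ≠ j := by rintro rfl; omega
    have haj : 0 < a j := by linarith [hb.1 j]
    have ha' : a + Finsupp.single j (-1) + Finsupp.single i 1 ∈ polyExps n z := by
      simpa using mapsTo_add_single_polyExps _ i (mapsTo_add_single_neg_polyExps z j ⟨ha, haj⟩)
    exact ih _ (hm ▸ sum_natAbs_sub_lt_of_transfer hij (by linarith) (by linarith)) ha'
      (transfer a hPa i j hij haj) rfl

end Exponents

section HomogeneousPolynomials

/-- The homogeneous polynomials of total degree `z`, inside the Laurent polynomials. -/
def homog (R : Type*) [CommRing R] (n : ℕ) (z : ℤ) : Submodule R (Laur R n) :=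
  AddMonoidAlgebra.supported R R (polyExps n z)

/-- The homogeneous polynomials of total degree `z` that are divisible by `X_i`. -/
def homogDvd (R : Type*) [CommRing R] (z : ℤ) (i : Fin n) : Submodule R (Laur R n) :=
  AddMonoidAlgebra.supported R R (polyExpsDvd z i)

theorem homogDvd_le_homog (z : ℤ) (i : Fin n) : homogDvd R z i ≤ homog R n z :=
  AddMonoidAlgebra.supported_mono fun _ ha => ha.1

theorem degSub_eq_homog (F : Type*) [Field F] (n d : ℕ) : degSub F n d = homog F n d := by
  rw [homog, AddMonoidAlgebra.supported_eq_span_single, degSub]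
  congr 1
  ext p
  simp [polyExps, mono, Set.mem_image, and_assoc, eq_comm]

instance finiteDimensional_homog (F : Type*) [Field F] (n : ℕ) (z : ℤ) :
    FiniteDimensional F (homog F n z) :=
  finiteDimensional_supported (finite_polyExps n z)

instance finiteDimensional_homogDvd (F : Type*) [Field F] (z : ℤ) (i : Fin n) :
    FiniteDimensional F (homogDvd F z i) :=
  Submodule.finiteDimensional_of_le (homogDvd_le_homog z i)

theorem XOp_eq_monomialOp (i : Fin n) :
    (XOp i : Module.End R (Laur R n)) = monomialOp (Equiv.addRight (Finsupp.single i 1)) 1 :=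
  eq_monomialOp fun a r => by
    simp [XOp, mulOp, Xel, mono, AddMonoidAlgebra.single_mul_single, add_comm]

theorem XinvOp_eq_monomialOp (i : Fin n) :
    (XinvOp i : Module.End R (Laur R n)) =
      monomialOp (Equiv.addRight (Finsupp.single i (-1))) 1 :=
  eq_monomialOp fun a r => by
    simp [XinvOp, mulOp, XinvEl, mono, AddMonoidAlgebra.single_mul_single, add_comm]

theorem XOp_mem_homog (i : Fin n) {z : ℤ} {p : Laur R n} (hp : p ∈ homog R n z) :
    XOp i p ∈ homog R n (z + 1) := by
  rw [XOp_eq_monomialOp]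
  exact monomialOp_mem_supported (mapsTo_add_single_polyExps z i) 1 hp

theorem XinvOp_mem_homog (i : Fin n) {z : ℤ} {p : Laur R n} (hp : p ∈ homogDvd R z i) :
    XinvOp i p ∈ homog R n (z - 1) := by
  rw [XinvOp_eq_monomialOp]
  exact monomialOp_mem_supported (mapsTo_add_single_neg_polyExps z i) 1 hp

/-- The action of the symmetric group on Laurent polynomials by permutation of the variables. -/
def permOp : Equiv.Perm (Fin n) →* Module.End R (Laur R n) where
  toFun w := monomialOp (permExp w) 1
  map_one' := by rw [map_one, monomialOp_one]
  map_mul' w w' := by simp [monomialOp_mul, Pi.one_def]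

theorem permOp_def (w : Equiv.Perm (Fin n)) :
    (permOp w : Module.End R (Laur R n)) = monomialOp (permExp w) 1 := rfl

theorem permOp_mem_homog (w : Equiv.Perm (Fin n)) {z : ℤ} {p : Laur R n} (hp : p ∈ homog R n z) :
    permOp w p ∈ homog R n z :=
  monomialOp_mem_supported (mapsTo_permExp_polyExps w z) 1 hp

theorem permOp_mem_homogDvd (w : Equiv.Perm (Fin n)) {z : ℤ} {i : Fin n} {p : Laur R n}
    (hp : p ∈ homogDvd R z i) : permOp w p ∈ homogDvd R z (w i) :=
  monomialOp_mem_supported (mapsTo_permExp_polyExpsDvd w z i) 1 hp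

end HomogeneousPolynomials

section Division

theorem coeff_Xel_mul (i : Fin n) (p : Laur R n) (a : Fin n →₀ ℤ) :
    (Xel i * p).coeff a = p.coeff (a - Finsupp.single i 1) := by
  rw [Xel, mono, AddMonoidAlgebra.coeff_single_mul_apply, one_mul, neg_add_eq_sub]

theorem coeff_mem_of_coeff_Xel_sub_Xel_mul_mem {i j : Fin n} (hij : i ≠ j) {p : Laur R n}
    {N : AddSubgroup R} {S : Set (Fin n →₀ ℤ)}
    (hS : ∀ a ∈ S, a + (Finsupp.single i 1 - Finsupp.single j 1) ∈ S)
    (h : ∀ a ∈ S, ((Xel i - Xel j) * p).coeff (a + Finsupp.single i 1) ∈ N) {a : Fin n →₀ ℤ}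
    (ha : a ∈ S) : p.coeff a ∈ N := by
  set δ : Fin n →₀ ℤ := Finsupp.single i 1 - Finsupp.single j 1 with hδ
  have hstep (b) (hb : b ∈ S) : p.coeff b - p.coeff (b + δ) ∈ N := by
    simpa [sub_mul, coeff_Xel_mul, hδ, add_sub_assoc] using h b hb
  have hiter (m : ℕ) : ∀ b ∈ S, p.coeff (b + m • δ) = 0 → p.coeff b ∈ N := by
    induction m with
    | zero => intro b _ h0; simp_all [N.zero_mem]
    | succ m ih =>
      intro b hb h0
      have hb' : p.coeff (b + δ) ∈ N :=
        ih (b + δ) (hS b hb) (by rwa [add_assoc, ← succ_nsmul'])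
      simpa using N.add_mem (hstep b hb) hb'
  -- The exponents `a + m • δ` are distinct, so one of them lies outside the support of `p`.
  have hinj : Function.Injective fun m : ℕ => a + m • δ := fun m m' hm => by
    simpa [hδ, hij] using DFunLike.congr_fun hm i
  obtain ⟨_, ⟨m, rfl⟩, hm⟩ :=
    (Set.infinite_range_of_injective hinj).exists_notMem_finset p.coeff.support
  exact hiter m a ha (Finsupp.notMem_support_iff.mp hm)

theorem mem_gaussLT_of_Xel_sub_Xel_mul_mem {F Γ : Type*} [Field F]
    [LinearOrderedCommGroupWithZero Γ] {v : Valuation F Γ} {i j : Fin n} (hij : i ≠ j)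
    {p : Laur F n} (h : (Xel i - Xel j) * p ∈ gaussLT v) : p ∈ gaussLT v := fun a =>
  coeff_mem_of_coeff_Xel_sub_Xel_mul_mem (N := v.ltAddSubgroup 1) hij
    (fun _ _ => Set.mem_univ _) (fun b _ => h (b + Finsupp.single i 1)) (Set.mem_univ a)

theorem coeff_eq_zero_of_coeff_Xel_sub_Xel_mul_eq_zero {i j : Fin n} (hij : i ≠ j) {p : Laur R n}
    {S : Set (Fin n →₀ ℤ)} (hS : ∀ a ∈ S, a + (Finsupp.single i 1 - Finsupp.single j 1) ∈ S)
    (h : ∀ a ∈ S, ((Xel i - Xel j) * p).coeff (a + Finsupp.single i 1) = 0) {a : Fin n →₀ ℤ}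
    (ha : a ∈ S) : p.coeff a = 0 :=
  coeff_mem_of_coeff_Xel_sub_Xel_mul_mem (N := ⊥) hij hS h ha

theorem mem_homogDvd_of_Xel_sub_Xel_mul_eq {i j : Fin n} (hij : i ≠ j) {z : ℤ} {p g : Laur R n}
    (hg : g ∈ homog R n z) (h : (Xel i - Xel j) * p = Xel i * g) : p ∈ homogDvd R z i := by
  have hg0 {a} : a ∉ polyExps n z → g.coeff a = 0 := AddMonoidAlgebra.mem_supported'.mp hg a
  have h' : (Xel j - Xel i) * p = -(Xel i * g) := by rw [← h]; ring
  refine AddMonoidAlgebra.mem_supported'.mpr fun a ha => ?_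
  by_cases hai : a i ≤ 0
  · refine coeff_eq_zero_of_coeff_Xel_sub_Xel_mul_eq_zero (S := {b | b i ≤ 0}) hij.symm
      (fun b hb => ?_) (fun b hb => ?_) hai <;> rw [Set.mem_ofPred_eq] at hb
    · simpa [hij] using hb.trans zero_le_one
    · rw [h', AddMonoidAlgebra.coeff_neg, Finsupp.neg_apply, coeff_Xel_mul, hg0, neg_zero]
      intro hc
      have hbi : 1 ≤ b i := by simpa [hij] using hc.1 i
      omega
  by_cases hsum : ∑ l, a l = z
  · obtain ⟨l, hl⟩ : ∃ l, a l < 0 := by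
      by_contra! hc
      exact ha ⟨⟨hc, hsum⟩, by omega⟩
    have hli : l ≠ i := by rintro rfl; omega
    refine coeff_eq_zero_of_coeff_Xel_sub_Xel_mul_eq_zero (S := {b | b l < 0}) hij
      (fun b hb => ?_) (fun b hb => ?_) hl <;> rw [Set.mem_ofPred_eq] at hb
    · simp only [Set.mem_ofPred_eq, Finsupp.add_apply, Finsupp.sub_apply, Finsupp.single_apply,
        if_neg hli.symm]
      split_ifs <;> omega
    · rw [h, coeff_Xel_mul, add_sub_cancel_right, hg0 fun hc => (hc.1 l).not_gt hb]
  · refine coeff_eq_zero_of_coeff_Xel_sub_Xel_mul_eq_zero (S := {b | ∑ l, b l ≠ z}) hij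
      (fun b hb => ?_) (fun b hb => ?_) hsum <;> rw [Set.mem_ofPred_eq] at hb
    · simpa [Finset.sum_add_distrib, Finsupp.single_apply] using hb
    · rw [h, coeff_Xel_mul, add_sub_cancel_right, hg0 fun hc => hb hc.2]

end Division

section Rotation

/-- The index of the last variable. -/
def lastVar (n : ℕ) [NeZero n] : Fin n := ⟨n - 1, Nat.sub_one_lt (NeZero.ne n)⟩

/-- The adjacent transposition of `k` and `k + 1`, with junk value `1` if `n ≤ k + 1`. -/
def adjSwap (n k : ℕ) : Equiv.Perm (Fin n) :=
  if hk : k + 1 < n then Equiv.swap ⟨k, Nat.lt_of_succ_lt hk⟩ ⟨k + 1, hk⟩ else 1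

theorem adjSwap_of_lt {k : ℕ} (hk : k + 1 < n) :
    adjSwap n k = Equiv.swap ⟨k, Nat.lt_of_succ_lt hk⟩ ⟨k + 1, hk⟩ :=
  dif_pos hk

theorem adjSwap_inv (k : ℕ) : (adjSwap n k)⁻¹ = adjSwap n k := by
  unfold adjSwap
  split_ifs
  · exact Equiv.swap_inv _ _
  · exact inv_one

theorem dF_adjSwap (s l : ℕ) : dF (adjSwap n) s l = (aF (adjSwap n) s l)⁻¹ := by
  simpa only [adjSwap_inv] using dF_inv (adjSwap n) s l

theorem val_adjSwap {k : ℕ} (hk : k + 1 < n) (b : Fin n) :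
    (adjSwap n k b : ℕ) = if (b : ℕ) = k then k + 1 else if (b : ℕ) = k + 1 then k else b := by
  rw [adjSwap_of_lt hk, Equiv.swap_apply_def]
  simp only [Fin.ext_iff]
  split_ifs <;> rfl

theorem val_aF_adjSwap {s l : ℕ} (h : s + l < n) (b : Fin n) :
    (aF (adjSwap n) s l b : ℕ) =
      if (b : ℕ) = s + l then s else if s ≤ (b : ℕ) ∧ (b : ℕ) < s + l then b + 1 else b := by
  induction l generalizing s with
  | zero =>
    rw [aF_zero, Equiv.Perm.one_apply]
    grind
  | succ l ih =>
    rw [aF_succ_left, Equiv.Perm.mul_apply, val_adjSwap (by omega), ih (by omega)]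
    grind

theorem aF_adjSwap_apply_top {s l : ℕ} (h : s + l < n) :
    aF (adjSwap n) s l ⟨s + l, h⟩ = ⟨s, by omega⟩ :=
  Fin.ext (by rw [val_aF_adjSwap h, if_pos rfl])

theorem aF_adjSwap_apply_lastVar [NeZero n] (j : Fin n) :
    aF (adjSwap n) j (n - 1 - j) (lastVar n) = j := by
  have hlast : lastVar n = ⟨j + (n - 1 - j), by omega⟩ := 
    Fin.ext (show n - 1 = j + (n - 1 - j) by omega)
  rw [hlast, aF_adjSwap_apply_top]

theorem val_finRotate_symm [NeZero n] (b : Fin n) :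
    ((finRotate n).symm b : ℕ) = if (b : ℕ) = 0 then n - 1 else b - 1 := by
  obtain ⟨m, rfl⟩ := Nat.exists_eq_succ_of_ne_zero (NeZero.ne n)
  obtain ⟨c, rfl⟩ := (finRotate (m + 1)).surjective b
  rw [Equiv.symm_apply_apply]
  by_cases hc : c = Fin.last m
  · simp [hc]
  · rw [coe_finRotate_of_ne_last hc, if_neg (Nat.succ_ne_zero _), Nat.add_sub_cancel]

theorem finRotate_symm_zero [NeZero n] : (finRotate n).symm 0 = lastVar n :=
  Fin.ext (by rw [val_finRotate_symm]; simp [lastVar])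

theorem aF_adjSwap_mul_finRotate_symm_mul_aF_adjSwap [NeZero n] (i : Fin n) :
    aF (adjSwap n) i (n - 1 - i) * (finRotate n).symm * aF (adjSwap n) 0 i = 1 := by
  ext b
  have hb := b.2
  rw [Equiv.Perm.mul_apply, Equiv.Perm.mul_apply, val_aF_adjSwap (by omega), val_finRotate_symm,
    val_aF_adjSwap (by omega), Equiv.Perm.one_apply]
  grind

end Rotation

section DiagonalOperators

/-- The diagonal operator `X^a ↦ f (a i) X^a`. -/
def diagOp (f : ℤ → R) (i : Fin n) : Module.End R (Laur R n) :=
  monomialOp 1 fun a => f (a i)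

theorem diagOp_sub (f g : ℤ → R) (i : Fin n) :
    diagOp f i - diagOp g i = diagOp (f - g) i :=
  monomialOp_sub 1 _ _

theorem smul_diagOp (c : R) (f : ℤ → R) (i : Fin n) : c • diagOp f i = diagOp (c • f) i :=
  smul_monomialOp c 1 _

theorem diagOp_mul (f g : ℤ → R) (i : Fin n) : diagOp f i * diagOp g i = diagOp (f * g) i :=
  monomialOp_mul 1 1 _ _

theorem diagOp_one (i : Fin n) : diagOp (1 : ℤ → R) i = 1 :=
  monomialOp_one

theorem permOp_mul_diagOp (w : Equiv.Perm (Fin n)) (f : ℤ → R) (i : Fin n) :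
    permOp w * diagOp f i = diagOp f (w i) * permOp w := by
  simp [permOp_def, diagOp, monomialOp_mul, permExp_apply_apply]

theorem permOp_mul_XinvOp (w : Equiv.Perm (Fin n)) (i : Fin n) :
    (permOp w * XinvOp i : Module.End R (Laur R n)) = XinvOp (w i) * permOp w := by
  rw [XinvOp_eq_monomialOp, XinvOp_eq_monomialOp, permOp_def, monomialOp_mul, monomialOp_mul]
  congr 1
  ext1 a
  exact permExp_add_single w a i (-1)

theorem permOp_conj_XinvOp_mul_diagOp (w : Equiv.Perm (Fin n)) (f : ℤ → R) (i : Fin n) :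
    permOp w * (XinvOp i * diagOp f i) * permOp w⁻¹ = XinvOp (w i) * diagOp f (w i) := by
  rw [← mul_assoc, permOp_mul_XinvOp, mul_assoc (XinvOp _), permOp_mul_diagOp, mul_assoc,
    mul_assoc, ← map_mul, mul_inv_cancel, map_one, mul_one]

theorem XOp_mul_XinvOp_mul_diagOp (f : ℤ → R) (i j : Fin n) :
    XOp i * (XinvOp j * diagOp f j) =
      monomialOp (Equiv.addRight (Finsupp.single i 1) * Equiv.addRight (Finsupp.single j (-1)))
        fun a => f (a j) := by
  rw [XOp_eq_monomialOp, XinvOp_eq_monomialOp, diagOp, monomialOp_mul, monomialOp_mul, mul_one]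
  congr 1
  ext a
  simp

theorem diagOp_mem_homog (f : ℤ → R) (i : Fin n) {z : ℤ} {p : Laur R n}
    (hp : p ∈ homog R n z) : diagOp f i p ∈ homog R n z :=
  monomialOp_mem_supported (Set.mapsTo_id _) _ hp

theorem diagOp_mem_homogDvd (f : ℤ → R) (i : Fin n) {z : ℤ} {p : Laur R n}
    (hp : p ∈ homogDvd R z i) : diagOp f i p ∈ homogDvd R z i :=
  monomialOp_mem_supported (Set.mapsTo_id _) _ hp

theorem diagOp_sub_smul_mem_homogDvd (f : ℤ → R) (i : Fin n) {z : ℤ} {p : Laur R n}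
    (hp : p ∈ homog R n z) : diagOp f i p - f 0 • p ∈ homogDvd R z i := by
  refine AddMonoidAlgebra.mem_supported'.mpr fun a ha => ?_
  have hcoeff : (diagOp f i p).coeff a = f (a i) * p.coeff a := coeff_monomialOp 1 _ p a
  rw [AddMonoidAlgebra.coeff_sub, AddMonoidAlgebra.coeff_smul, Finsupp.sub_apply,
    Finsupp.smul_apply, hcoeff, smul_eq_mul, ← sub_mul]
  by_cases haz : a ∈ polyExps n z
  · have hai : a i = 0 := (not_lt.mp fun h => ha ⟨haz, h⟩).antisymm (haz.1 i)
    rw [hai, sub_self, zero_mul]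
  · rw [AddMonoidAlgebra.mem_supported'.mp hp a haz, mul_zero]

end DiagonalOperators

section DemazureLusztig

variable {F : Type*} [Field F] {t : F}

/-- `A` is the Demazure–Lusztig operator for the variables `X_i`, `X_j` with parameter `t`; its
defining formula is multiplied by the denominator `X_j - X_i`, which is cancellable. -/
def IsDemazureLusztig (t : F) (i j : Fin n) (A : Module.End F (Laur F n)) : Prop :=
  ∀ p, (Xel j - Xel i) * A p =
    (t⁻¹ • Xel j - t • Xel i) * permOp (Equiv.swap i j) p + (t - t⁻¹) • (Xel j * p)

namespace IsDemazureLusztig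

variable {i j : Fin n} {A : Module.End F (Laur F n)}

theorem inverse (h : IsDemazureLusztig t i j A) :
    IsDemazureLusztig t⁻¹ j i (A + (t⁻¹ - t) • 1) := fun p => by
  have hone : (Xel i - Xel j) * ((t⁻¹ - t) • p) = (t⁻¹ - t) • (Xel i * p - Xel j * p) := by
    rw [mul_smul_comm, sub_mul]
  have hneg : (Xel i - Xel j) * A p = -((Xel j - Xel i) * A p) := by ring
  rw [LinearMap.add_apply, LinearMap.smul_apply, Module.End.one_apply, mul_add, hneg, hone,
    h p, inv_inv, Equiv.swap_comm j i]
  simp only [sub_mul, sub_smul, smul_sub, smul_mul_assoc]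
  abel

theorem sub_smul_mem_homogDvd (h : IsDemazureLusztig t i j A) (hij : i ≠ j) {z : ℤ} {p : Laur F n}
    (hp : p ∈ homog F n z) : A p - t • permOp (Equiv.swap i j) p ∈ homogDvd F z j := by
  refine mem_homogDvd_of_Xel_sub_Xel_mul_eq hij.symm (g := (t - t⁻¹) • (p - permOp _ p))
    (Submodule.smul_mem _ _ (sub_mem hp (permOp_mem_homog (Equiv.swap i j) hp))) ?_
  rw [mul_sub, h p]
  simp only [sub_mul, mul_sub, sub_smul, smul_sub, smul_mul_assoc, mul_smul_comm]
  abel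

theorem mem_homog (h : IsDemazureLusztig t i j A) (hij : i ≠ j) {z : ℤ} {p : Laur F n}
    (hp : p ∈ homog F n z) : A p ∈ homog F n z := by
  simpa using add_mem (homogDvd_le_homog z j (h.sub_smul_mem_homogDvd hij hp))
    (Submodule.smul_mem _ t (permOp_mem_homog (Equiv.swap i j) hp))

end IsDemazureLusztig

/-- The operators `T_k`, with the paper's index `k + 1` for our `k`, are the Demazure–Lusztig
operators for adjacent variables. -/
def IsDemazureLusztigFamily (t : F) (T : ℕ → Module.End F (Laur F n)) : Prop :=
  ∀ (k : ℕ) (hk : k + 1 < n), IsDemazureLusztig t ⟨k, Nat.lt_of_succ_lt hk⟩ ⟨k + 1, hk⟩ (T k)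

/-- The operators `T_k⁻¹ = T_k + t⁻¹ - t`, as given by the quadratic Hecke relation. -/
def dlInv (t : F) (T : ℕ → Module.End F (Laur F n)) (k : ℕ) : Module.End F (Laur F n) :=
  T k + (t⁻¹ - t) • 1

/-- The operator `π⁻¹`, which rotates the variables cyclically and rescales by `q ^ a₁`. -/
def cyclicShift [NeZero n] (q : F) : Module.End F (Laur F n) :=
  permOp (finRotate n).symm * diagOp (fun x => q ^ x) 0

/-- The renormalised Cherednik operators `Y'_i = t ^ (n - 1) Y_i`. -/
def cherednik [NeZero n] (t q : F) (T : ℕ → Module.End F (Laur F n)) (i : ℕ) :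
    Module.End F (Laur F n) :=
  t ^ (n - 1) • (aF T i (n - 1 - i) * cyclicShift q * aF (dlInv t T) 0 i)

/-- The `q`-Dunkl operators `D'_i`, in which `Yi` stands for the inverses of the operators
`cherednik t q T`. -/
def qDunkl [NeZero n] (t q : F) (T Yi : ℕ → Module.End F (Laur F n)) (i : ℕ) :
    Module.End F (Laur F n) :=
  aF T i (n - 1 - i) *
    ((q - q⁻¹)⁻¹ • (XinvOp (n - 1) * (cherednik t q T (n - 1) - Yi (n - 1)))) *
    dF T i (n - 1 - i)

end DemazureLusztig

section Stability

variable {F : Type*} [Field F] {t q : F} {T : ℕ → Module.End F (Laur F n)}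

namespace IsDemazureLusztigFamily

theorem apply_mem_invariantSubalgebra (hT : IsDemazureLusztigFamily t T) (z : ℤ) {k : ℕ}
    (hk : k + 1 < n) : T k ∈ invariantSubalgebra (homog F n z) := fun _ hp =>
  (hT k hk).mem_homog (by simp) hp

theorem dlInv_mem_invariantSubalgebra (hT : IsDemazureLusztigFamily t T) (z : ℤ) {k : ℕ}
    (hk : k + 1 < n) : dlInv t T k ∈ invariantSubalgebra (homog F n z) := fun _ hp =>
  (hT k hk).inverse.mem_homog (by simp) hp

theorem aF_mem_invariantSubalgebra (hT : IsDemazureLusztigFamily t T) (z : ℤ) {s l : ℕ}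
    (h : s + l < n) : aF T s l ∈ invariantSubalgebra (homog F n z) :=
  aF_mem (S := (invariantSubalgebra (homog F n z)).toSubmonoid) fun _ _ _ =>
    hT.apply_mem_invariantSubalgebra z (by omega)

theorem dF_mem_invariantSubalgebra (hT : IsDemazureLusztigFamily t T) (z : ℤ) {s l : ℕ}
    (h : s + l < n) : dF T s l ∈ invariantSubalgebra (homog F n z) :=
  dF_mem (S := (invariantSubalgebra (homog F n z)).toSubmonoid) fun _ _ _ =>
    hT.apply_mem_invariantSubalgebra z (by omega)

theorem aF_dlInv_mem_invariantSubalgebra (hT : IsDemazureLusztigFamily t T) (z : ℤ) {s l : ℕ}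
    (h : s + l < n) : aF (dlInv t T) s l ∈ invariantSubalgebra (homog F n z) :=
  aF_mem (S := (invariantSubalgebra (homog F n z)).toSubmonoid) fun _ _ _ =>
    hT.dlInv_mem_invariantSubalgebra z (by omega)

theorem aF_dlInv_sub_smul_mem_homogDvd (hT : IsDemazureLusztigFamily t T) {z : ℤ} {s l : ℕ}
    (h : s + l < n) {p : Laur F n} (hp : p ∈ homog F n z) :
    aF (dlInv t T) s l p - t⁻¹ ^ l • permOp (aF (adjSwap n) s l) p ∈
      homogDvd F z ⟨s, by omega⟩ := by
  induction l generalizing s with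
  | zero => simp [aF_zero]
  | succ l ih =>
    have hs : s + 1 < n := by omega
    have hfirst := (hT s hs).inverse.sub_smul_mem_homogDvd (by simp)
      (hT.aF_dlInv_mem_invariantSubalgebra z (s := s + 1) (l := l) (by omega) p hp)
    have hrest := permOp_mem_homogDvd (adjSwap n s) (ih (s := s + 1) (by omega))
    rw [Equiv.swap_comm, ← adjSwap_of_lt hs] at hfirst
    rw [adjSwap_of_lt hs, Equiv.swap_apply_right, ← adjSwap_of_lt hs, map_sub, map_smul] at hrest
    rw [aF_succ_left, aF_succ_left, map_mul, Module.End.mul_apply, Module.End.mul_apply]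
    convert add_mem hfirst (Submodule.smul_mem _ t⁻¹ hrest) using 1
    rw [smul_sub, smul_smul, pow_succ', dlInv]
    abel

end IsDemazureLusztigFamily

theorem inverse_sub_mem_homogDvd {A B : Module.End F (Laur F n)} (hBA : B * A = 1) {z : ℤ}
    {i : Fin n} (hA : ∀ p ∈ homog F n z, A p - p ∈ homogDvd F z i) {p : Laur F n}
    (hp : p ∈ homog F n z) : B p - p ∈ homogDvd F z i := by
  have hAinv : A ∈ invariantSubalgebra (homogDvd F z i) := fun r hr => by
    simpa using add_mem (hA r (homogDvd_le_homog z i hr)) hr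
  have hB : B (A p - p) ∈ homogDvd F z i :=
    mem_invariantSubalgebra_of_mul_eq_one hBA hAinv _ (hA p hp)
  have hBAp : B (A p) = p := LinearMap.congr_fun hBA p
  rw [map_sub, hBAp] at hB
  simpa using neg_mem hB

variable [NeZero n]

theorem permOp_mul_cyclicShift_mul_permOp (q : F) (i : Fin n) :
    permOp (aF (adjSwap n) i (n - 1 - i)) * cyclicShift q * permOp (aF (adjSwap n) 0 i) =
      diagOp (fun x => q ^ x) i := by
  have hzero : aF (adjSwap n) 0 i i = 0 := by
    simpa using aF_adjSwap_apply_top (n := n) (s := 0) (l := i) (by omega)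
  rw [cyclicShift, ← hzero, mul_assoc, mul_assoc, ← permOp_mul_diagOp, ← mul_assoc, ← mul_assoc,
    ← map_mul, ← map_mul, aF_adjSwap_mul_finRotate_symm_mul_aF_adjSwap, map_one, one_mul]

theorem cyclicShift_mul_permOp (q : F) :
    cyclicShift q * permOp (aF (adjSwap n) 0 (n - 1)) = diagOp (fun x => q ^ x) (lastVar n) := by
  simpa [lastVar, aF_zero] using permOp_mul_cyclicShift_mul_permOp q (lastVar n)

theorem cyclicShift_mem_invariantSubalgebra (q : F) (z : ℤ) :
    cyclicShift q ∈ invariantSubalgebra (homog F n z) := fun _ hp => by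
  rw [cyclicShift, Module.End.mul_apply]
  exact permOp_mem_homog _ (diagOp_mem_homog _ _ hp)

theorem cyclicShift_mem_homogDvd (q : F) {z : ℤ} {p : Laur F n} (hp : p ∈ homogDvd F z 0) :
    cyclicShift q p ∈ homogDvd F z (lastVar n) := by
  rw [← finRotate_symm_zero]
  exact permOp_mem_homogDvd _ (diagOp_mem_homogDvd _ _ hp)

namespace IsDemazureLusztigFamily

theorem cherednik_mem_invariantSubalgebra (hT : IsDemazureLusztigFamily t T) (q : F) (z : ℤ)
    {i : ℕ} (hi : i < n) : cherednik t q T i ∈ invariantSubalgebra (homog F n z) :=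
  Subalgebra.smul_mem _ (mul_mem (mul_mem (hT.aF_mem_invariantSubalgebra z (by omega))
    (cyclicShift_mem_invariantSubalgebra q z))
    (hT.aF_dlInv_mem_invariantSubalgebra z (by omega))) _

theorem cherednik_last_sub_mem_homogDvd (hT : IsDemazureLusztigFamily t T) (ht : t ≠ 0) (q : F)
    {z : ℤ} {p : Laur F n} (hp : p ∈ homog F n z) :
    cherednik t q T (n - 1) p - p ∈ homogDvd F z (lastVar n) := by
  have hn : 0 + (n - 1) < n := by rw [zero_add]; exact Nat.sub_one_lt (NeZero.ne n)
  have hshift := cyclicShift_mem_homogDvd q (hT.aF_dlInv_sub_smul_mem_homogDvd hn hp)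
  have hdiag := diagOp_sub_smul_mem_homogDvd (fun x => q ^ x) (lastVar n) hp
  rw [zpow_zero, one_smul] at hdiag
  rw [map_sub, map_smul, ← Module.End.mul_apply, ← Module.End.mul_apply,
    cyclicShift_mul_permOp] at hshift
  convert add_mem (Submodule.smul_mem _ (t ^ (n - 1)) hshift) hdiag using 1
  rw [cherednik, Nat.sub_self, aF_zero, one_mul, LinearMap.smul_apply, smul_sub, smul_smul,
    ← mul_pow, mul_inv_cancel₀ ht, one_pow, one_smul, sub_add_sub_cancel]

theorem qDunkl_mem_homog (hT : IsDemazureLusztigFamily t T) (ht : t ≠ 0)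
    {Yi : ℕ → Module.End F (Laur F n)}
    (hYi : Yi (n - 1) * cherednik t q T (n - 1) = 1) {j : ℕ} (hj : j < n) {z : ℤ} {p : Laur F n}
    (hp : p ∈ homog F n z) : qDunkl t q T Yi j p ∈ homog F n (z - 1) := by
  refine hT.aF_mem_invariantSubalgebra _ (by omega) _ (Submodule.smul_mem _ _ ?_)
  have hdF := hT.dF_mem_invariantSubalgebra z (s := j) (l := n - 1 - j) (by omega) p hp
  refine XinvOp_mem_homog (lastVar n) ?_
  have hY := hT.cherednik_last_sub_mem_homogDvd ht q hdF
  have hYi' := inverse_sub_mem_homogDvd hYi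
    (fun _ hr => hT.cherednik_last_sub_mem_homogDvd ht q hr) hdF
  rw [LinearMap.sub_apply, ← sub_sub_sub_cancel_right]
  exact sub_mem hY hYi'

theorem XOp_mul_qDunkl_mem_invariantSubalgebra (hT : IsDemazureLusztigFamily t T) (ht : t ≠ 0)
    {Yi : ℕ → Module.End F (Laur F n)}
    (hYi : Yi (n - 1) * cherednik t q T (n - 1) = 1) {i j : ℕ} (hi : i < n) (hj : j < n) (z : ℤ) :
    XOp i * qDunkl t q T Yi j ∈ invariantSubalgebra (homog F n z) := fun p hp => by
  simpa using XOp_mem_homog ⟨i, hi⟩ (hT.qDunkl_mem_homog ht hYi hj hp)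

end IsDemazureLusztigFamily

end Stability

section ValuationUnits

variable {F Γ : Type*} [Field F] [LinearOrderedCommGroupWithZero Γ] {v : Valuation F Γ}

theorem valuation_eq_one_of_sub_one_lt_one {x : F} (hx : v (x - 1) < 1) : v x = 1 := by
  simpa using v.map_one_add_of_lt hx

theorem ne_zero_of_valuation_eq_one {x : F} (hx : v x = 1) : x ≠ 0 := by
  rintro rfl
  simp at hx

theorem valuation_inv_sub_one_lt_one {x : F} (hx : v (x - 1) < 1) : v (x⁻¹ - 1) < 1 := by
  have hx1 := valuation_eq_one_of_sub_one_lt_one hx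
  have hx0 := ne_zero_of_valuation_eq_one hx1
  have hinv : x⁻¹ - 1 = -(x⁻¹ * (x - 1)) := by
    rw [mul_sub, inv_mul_cancel₀ hx0, mul_one, neg_sub]
  rwa [hinv, Valuation.map_neg, map_mul, map_inv₀, hx1, inv_one, one_mul]

theorem valuation_pow_sub_one_lt_one {x : F} (hx : v (x - 1) < 1) (m : ℕ) :
    v (x ^ m - 1) < 1 := by
  induction m with
  | zero => simp
  | succ m ih =>
    have hsplit : x ^ (m + 1) - 1 = x ^ m * (x - 1) + (x ^ m - 1) := by ring
    rw [hsplit]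
    refine v.map_add_lt ?_ ih
    rwa [map_mul, map_pow, valuation_eq_one_of_sub_one_lt_one hx, one_pow, one_mul]

theorem valuation_zpow_sub_zpow {q : F} (hq : v q = 1)
    (hroot : ∀ m : ℕ, m ≠ 0 → v (q ^ m - 1) = 1) {x y : ℤ} (hxy : x ≠ y) :
    v (q ^ x - q ^ y) = 1 := by
  wlog h : y < x generalizing x y
  · rw [Valuation.map_sub_swap]
    exact this hxy.symm (hxy.lt_or_gt.resolve_right h)
  obtain ⟨m, rfl⟩ := Int.le.dest h.le
  have hfactor : q ^ (y + (m : ℤ)) - q ^ y = q ^ y * (q ^ m - 1) := by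
    rw [zpow_add₀ (ne_zero_of_valuation_eq_one hq), zpow_natCast, mul_sub_one]
  rw [hfactor, map_mul, map_zpow₀, hq, one_zpow, one_mul, hroot m (by omega)]

end ValuationUnits

section Specialization

variable {F Γ : Type*} [Field F] [LinearOrderedCommGroupWithZero Γ] {v : Valuation F Γ} {t q : F}

theorem specializesTo_permOp_self (w : Equiv.Perm (Fin n)) :
    SpecializesTo v (permOp w : Module.End F (Laur F n)) (permOp w) :=
  specializesTo_monomialOp_self _ fun _ => v.map_one.le

theorem specializesTo_XinvOp_self (i : Fin n) :
    SpecializesTo v (XinvOp i : Module.End F (Laur F n)) (XinvOp i) := by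
  rw [XinvOp_eq_monomialOp]
  exact specializesTo_monomialOp_self _ fun _ => v.map_one.le

theorem specializesTo_XOp_self (i : Fin n) :
    SpecializesTo v (XOp i : Module.End F (Laur F n)) (XOp i) := by
  rw [XOp_eq_monomialOp]
  exact specializesTo_monomialOp_self _ fun _ => v.map_one.le

theorem Xel_mul_mem_gaussLE (i : Fin n) {p : Laur F n} (hp : p ∈ gaussLE v) :
    Xel i * p ∈ gaussLE v := by
  simpa [XOp, mulOp] using (specializesTo_XOp_self i).map_right p hp

theorem IsDemazureLusztig.specializesTo {i j : Fin n} {A : Module.End F (Laur F n)}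
    (h : IsDemazureLusztig t i j A) (hij : i ≠ j) (ht : v (t - 1) < 1) :
    SpecializesTo v A (permOp (Equiv.swap i j)) := by
  refine ⟨(specializesTo_permOp_self _).map_right, fun p hp => ?_⟩
  have hs := (specializesTo_permOp_self (Equiv.swap i j)).map_right p hp
  have htinv := valuation_inv_sub_one_lt_one ht
  have httinv : v (t - t⁻¹) < 1 := by
    rw [← sub_sub_sub_cancel_right t t⁻¹ 1]
    exact v.map_sub_lt ht htinv
  have hdiff : (Xel j - Xel i) * (A p - permOp (Equiv.swap i j) p) =
      (t⁻¹ - 1) • (Xel j * permOp (Equiv.swap i j) p) -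
        (t - 1) • (Xel i * permOp (Equiv.swap i j) p) + (t - t⁻¹) • (Xel j * p) := by
    rw [mul_sub, h p]
    simp only [sub_mul, sub_smul, one_smul, smul_mul_assoc]
    abel
  refine mem_gaussLT_of_Xel_sub_Xel_mul_mem hij.symm ?_
  rw [hdiff]
  exact add_mem (sub_mem (smul_mem_gaussLT_of_lt_one htinv (Xel_mul_mem_gaussLE j hs))
    (smul_mem_gaussLT_of_lt_one ht (Xel_mul_mem_gaussLE i hs)))
    (smul_mem_gaussLT_of_lt_one httinv (Xel_mul_mem_gaussLE j hp))

namespace IsDemazureLusztigFamily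

variable {T : ℕ → Module.End F (Laur F n)}

theorem specializesTo (hT : IsDemazureLusztigFamily t T) (ht : v (t - 1) < 1) {k : ℕ}
    (hk : k + 1 < n) : SpecializesTo v (T k) (permOp (adjSwap n k)) := by
  rw [adjSwap_of_lt hk]
  exact (hT k hk).specializesTo (by simp) ht

theorem specializesTo_dlInv (hT : IsDemazureLusztigFamily t T) (ht : v (t - 1) < 1) {k : ℕ}
    (hk : k + 1 < n) : SpecializesTo v (dlInv t T k) (permOp (adjSwap n k)) := by
  rw [adjSwap_of_lt hk, Equiv.swap_comm]
  exact (hT k hk).inverse.specializesTo (by simp) (valuation_inv_sub_one_lt_one ht)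

theorem specializesTo_aF (hT : IsDemazureLusztigFamily t T) (ht : v (t - 1) < 1) {s l : ℕ}
    (h : s + l < n) : SpecializesTo v (aF T s l) (permOp (aF (adjSwap n) s l)) :=
  aF_rel (r := fun A w => SpecializesTo v A (permOp w)) (by simpa using SpecializesTo.one)
    (fun h h' => by simpa using h.mul h') fun _ _ _ => hT.specializesTo ht (by omega)

theorem specializesTo_dF (hT : IsDemazureLusztigFamily t T) (ht : v (t - 1) < 1) {s l : ℕ}
    (h : s + l < n) : SpecializesTo v (dF T s l) (permOp (dF (adjSwap n) s l)) :=
  dF_rel (r := fun A w => SpecializesTo v A (permOp w)) (by simpa using SpecializesTo.one)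
    (fun h h' => by simpa using h.mul h') fun _ _ _ => hT.specializesTo ht (by omega)

theorem specializesTo_aF_dlInv (hT : IsDemazureLusztigFamily t T) (ht : v (t - 1) < 1) {s l : ℕ}
    (h : s + l < n) : SpecializesTo v (aF (dlInv t T) s l) (permOp (aF (adjSwap n) s l)) :=
  aF_rel (r := fun A w => SpecializesTo v A (permOp w)) (by simpa using SpecializesTo.one)
    (fun h h' => by simpa using h.mul h') fun _ _ _ => hT.specializesTo_dlInv ht (by omega)

end IsDemazureLusztigFamily

theorem specializesTo_diagOp_zpow_self (hq : v q = 1) (i : Fin n) :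
    SpecializesTo v (diagOp (fun x => q ^ x) i) (diagOp (fun x => q ^ x) i) :=
  specializesTo_monomialOp_self _ fun a => by simp [hq]

variable [NeZero n] {T Yi : ℕ → Module.End F (Laur F n)}

theorem specializesTo_cyclicShift_self (hq : v q = 1) :
    SpecializesTo v (cyclicShift q : Module.End F (Laur F n)) (cyclicShift q) :=
  (specializesTo_permOp_self _).mul (specializesTo_diagOp_zpow_self hq 0)

namespace IsDemazureLusztigFamily

theorem specializesTo_cherednik (hT : IsDemazureLusztigFamily t T) (ht : v (t - 1) < 1)
    (hq : v q = 1) (i : Fin n) :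
    SpecializesTo v (cherednik t q T i) (diagOp (fun x => q ^ x) i) := by
  rw [← permOp_mul_cyclicShift_mul_permOp]
  exact (((hT.specializesTo_aF ht (by omega)).mul (specializesTo_cyclicShift_self hq)).mul
    (hT.specializesTo_aF_dlInv ht (by omega))).smul_left (valuation_pow_sub_one_lt_one ht _)

theorem specializesTo_cherednik_inverse (hT : IsDemazureLusztigFamily t T) (ht : v (t - 1) < 1)
    (hq : v q = 1) (i : Fin n) {B : Module.End F (Laur F n)} (hB : cherednik t q T i * B = 1) :
    SpecializesTo v B (diagOp (fun x => q ^ (-x)) i) := by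
  refine (hT.specializesTo_cherednik ht hq i).inverse hB ?_ fun _ hp =>
    monomialOp_mem_gaussLE 1 (fun a => by simp [hq]) hp
  rw [diagOp_mul, ← diagOp_one i]
  congr 1
  ext x
  exact zpow_neg_mul_zpow_self x (ne_zero_of_valuation_eq_one hq)

end IsDemazureLusztigFamily

/-- The symmetric `q`-integer `[x]_q = (q ^ x - q ^ (-x)) / (q - q⁻¹)`. -/
def qInt (q : F) (x : ℤ) : F := (q - q⁻¹)⁻¹ * (q ^ x - q ^ (-x))

theorem valuation_sub_inv (hq : v q = 1) (hroot : ∀ m : ℕ, m ≠ 0 → v (q ^ m - 1) = 1) :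
    v (q - q⁻¹) = 1 := by
  simpa using valuation_zpow_sub_zpow hq hroot (x := 1) (y := -1) (by norm_num)

theorem valuation_qInt (hq : v q = 1) (hroot : ∀ m : ℕ, m ≠ 0 → v (q ^ m - 1) = 1) {x : ℤ}
    (hx : x ≠ 0) : v (qInt q x) = 1 := by
  rw [qInt, map_mul, map_inv₀, valuation_sub_inv hq hroot,
    valuation_zpow_sub_zpow hq hroot (by omega), inv_one, one_mul]

namespace IsDemazureLusztigFamily

theorem specializesTo_qDunkl (hT : IsDemazureLusztigFamily t T) (ht : v (t - 1) < 1)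
    (hq : v q = 1) (hroot : ∀ m : ℕ, m ≠ 0 → v (q ^ m - 1) = 1)
    (hYi : cherednik t q T (n - 1) * Yi (n - 1) = 1) (j : Fin n) :
    SpecializesTo v (qDunkl t q T Yi j) (XinvOp j * diagOp (qInt q) j) := by
  have hY := hT.specializesTo_cherednik ht hq (lastVar n)
  have hYi' := hT.specializesTo_cherednik_inverse ht hq (lastVar n) hYi
  have hmid : SpecializesTo v
      ((q - q⁻¹)⁻¹ • (XinvOp (n - 1) * (cherednik t q T (n - 1) - Yi (n - 1))))
      (XinvOp (lastVar n) * diagOp (qInt q) (lastVar n)) := by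
    have hqInt : diagOp (qInt q) (lastVar n) = (q - q⁻¹)⁻¹ •
        (diagOp (fun x => q ^ x) (lastVar n) - diagOp (fun x => q ^ (-x)) (lastVar n)) := by
      rw [diagOp_sub, smul_diagOp]
      rfl
    rw [hqInt, mul_smul_comm]
    exact ((specializesTo_XinvOp_self (lastVar n)).mul (hY.sub hYi')).smul
      (by simp [valuation_sub_inv hq hroot])
  have hconj := permOp_conj_XinvOp_mul_diagOp (aF (adjSwap n) j (n - 1 - j)) (qInt q) (lastVar n)
  rw [aF_adjSwap_apply_lastVar, ← dF_adjSwap] at hconj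
  rw [← hconj]
  exact ((hT.specializesTo_aF ht (by omega)).mul hmid).mul (hT.specializesTo_dF ht (by omega))

theorem specializesTo_XOp_mul_qDunkl (hT : IsDemazureLusztigFamily t T) (ht : v (t - 1) < 1)
    (hq : v q = 1) (hroot : ∀ m : ℕ, m ≠ 0 → v (q ^ m - 1) = 1)
    (hYi : cherednik t q T (n - 1) * Yi (n - 1) = 1) (i j : Fin n) :
    SpecializesTo v (XOp i * qDunkl t q T Yi j)
      (monomialOp (Equiv.addRight (Finsupp.single i 1) * Equiv.addRight (Finsupp.single j (-1)))
        fun a => qInt q (a j)) := by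
  rw [← XOp_mul_XinvOp_mul_diagOp]
  exact (specializesTo_XOp_self i).mul (hT.specializesTo_qDunkl ht hq hroot hYi j)

theorem eq_bot_or_eq_homog (hT : IsDemazureLusztigFamily t T) (ht : v (t - 1) < 1)
    (hq : v q = 1) (hroot : ∀ m : ℕ, m ≠ 0 → v (q ^ m - 1) = 1)
    (hYi : cherednik t q T (n - 1) * Yi (n - 1) = 1) {z : ℤ} {V : Submodule F (Laur F n)}
    (hV : V ≤ homog F n z) (hYV : ∀ i : Fin n, cherednik t q T i ∈ invariantSubalgebra V)
    (heV : ∀ i j : Fin n, i ≠ j → XOp i * qDunkl t q T Yi j ∈ invariantSubalgebra V) :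
    V = ⊥ ∨ V = homog F n z := by
  refine or_iff_not_imp_left.mpr fun hV0 => ?_
  obtain ⟨a, ha⟩ := exists_reducesToMonomial (Y := fun i : Fin n => cherednik t q T i)
    (χ := fun i a => q ^ a i) (hT.specializesTo_cherednik ht hq)
    (fun a b hab => (DFunLike.ne_iff.mp hab).imp fun _ => valuation_zpow_sub_zpow hq hroot)
    hYV hV0
  have haz : a ∈ polyExps n z := ha.mem_of_le_supported hV
  refine eq_supported_of_reducesToMonomial (finite_polyExps n z) hV fun b hb =>
    polyExps_connected (P := ReducesToMonomial v V) (fun c hc i j hij hcj => ?_) haz hb ha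
  have hmove := hc.move (hT.specializesTo_XOp_mul_qDunkl ht hq hroot hYi i j) (heV i j hij)
    (valuation_qInt hq hroot hcj.ne')
  rwa [Equiv.Perm.mul_apply, Equiv.coe_addRight, Equiv.coe_addRight] at hmove

end IsDemazureLusztigFamily

end Specialization

section PointValuation

open Polynomial

/-- The place of `K(τ)` at the point `τ = a`, as a height one prime of `K[τ]`. -/
def pointPrime {K : Type*} [Field K] (a : K) : IsDedekindDomain.HeightOneSpectrum K[X] where
  asIdeal := Ideal.span {X - C a}
  isPrime := (Ideal.span_singleton_prime (X_sub_C_ne_zero a)).mpr (prime_X_sub_C a)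
  ne_bot := mt Ideal.span_singleton_eq_bot.mp (X_sub_C_ne_zero a)

theorem pointPrime_valuation_X_sub_C_lt_one {K : Type*} [Field K] (a : K) :
    (pointPrime a).valuation (RatFunc K) (RatFunc.X - RatFunc.C a) < 1 := by
  have hpoly : (RatFunc.X - RatFunc.C a : RatFunc K) = algebraMap K[X] (RatFunc K) (X - C a) := by
    rw [map_sub, RatFunc.algebraMap_X, RatFunc.algebraMap_C]
  rw [hpoly, IsDedekindDomain.HeightOneSpectrum.valuation_lt_one_iff_mem]
  exact Ideal.mem_span_singleton_self _

theorem pointPrime_valuation_algebraMap {K : Type*} [Field K] (a : K) {c : K} (hc : c ≠ 0) :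
    (pointPrime a).valuation (RatFunc K) (algebraMap K (RatFunc K) c) = 1 := by
  rw [IsScalarTower.algebraMap_apply K K[X] (RatFunc K),
    IsDedekindDomain.HeightOneSpectrum.valuation_eq_one_iff_notMem]
  exact fun hmem => (pointPrime a).isPrime.ne_top
    (Ideal.eq_top_of_isUnit_mem _ hmem (isUnit_C.mpr hc.isUnit))

end PointValuation

theorem eq_permOp {W : Equiv.Perm (Fin n) → Module.End R (Laur R n)}
    (hW : ∀ w a r, W w (mono a r) = mono (Finsupp.equivMapDomain w a) r) : W = permOp :=
  funext fun w => eq_monomialOp fun a r => by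
    rw [Pi.one_apply, one_mul]
    exact hW w a r

theorem eq_cyclicShift {F : Type*} [Field F] [NeZero n] {q : F} {P : Module.End F (Laur F n)}
    (hP : ∀ a r, P (mono a r) = q ^ a 0 • mono (Finsupp.equivMapDomain (finRotate n).symm a) r) :
    P = cyclicShift q := by
  rw [cyclicShift, permOp_def, diagOp, monomialOp_mul]
  refine eq_monomialOp fun a r => ?_
  rw [Pi.one_apply, one_mul]
  exact (hP a r).trans (AddMonoidAlgebra.smul_single _ _ _)

theorem statement15_general {F Γ : Type*} [Field F] [LinearOrderedCommGroupWithZero Γ]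
    {v : Valuation F Γ} {t q : F} (ht : v (t - 1) < 1) (hq : v q = 1)
    (hroot : ∀ m : ℕ, m ≠ 0 → v (q ^ m - 1) = 1) [NeZero n]
    {T Yi : ℕ → Module.End F (Laur F n)} (hT : IsDemazureLusztigFamily t T)
    (hYi : ∀ i, i < n → cherednik t q T i * Yi i = 1 ∧ Yi i * cherednik t q T i = 1) (d : ℕ) :
    ((∀ k, k + 1 < n → T k ∈ invariantSubalgebra (degSub F n d)) ∧
      (∀ i, i < n → cherednik t q T i ∈ invariantSubalgebra (degSub F n d) ∧
        Yi i ∈ invariantSubalgebra (degSub F n d)) ∧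
      (∀ i j, i < n → j < n → XOp i * qDunkl t q T Yi j ∈ invariantSubalgebra (degSub F n d))) ∧
    (∀ V ≤ degSub F n d, (∀ i, i < n → cherednik t q T i ∈ invariantSubalgebra V) →
      (∀ i j, i < n → j < n → i ≠ j → XOp i * qDunkl t q T Yi j ∈ invariantSubalgebra V) →
      V = ⊥ ∨ V = degSub F n d) := by
  have ht0 : t ≠ 0 := ne_zero_of_valuation_eq_one (valuation_eq_one_of_sub_one_lt_one ht)
  obtain ⟨hYlast, hlastY⟩ := hYi (n - 1) (lastVar n).2
  have hYd {i : ℕ} (hi : i < n) : cherednik t q T i ∈ invariantSubalgebra (homog F n d) :=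
    hT.cherednik_mem_invariantSubalgebra q d hi
  rw [degSub_eq_homog]
  refine ⟨⟨fun k hk => hT.apply_mem_invariantSubalgebra d hk, fun i hi => ⟨hYd hi, ?_⟩,
    fun i j hi hj => hT.XOp_mul_qDunkl_mem_invariantSubalgebra ht0 hlastY hi hj d⟩, ?_⟩
  · exact mem_invariantSubalgebra_of_mul_eq_one (hYi i hi).2 (hYd hi)
  · exact fun V hV hYV heV => hT.eq_bot_or_eq_homog ht hq hroot hYlast hV (fun i => hYV i i.2)
      fun i j hij => heV i j i.2 j.2 (Fin.val_ne_of_ne hij)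

/-- Over `F = ℂ(τ)` (realised as `RatFunc ℂ`), for every `d ≥ 0` the
operators `T_k`, `Y'_i`, `(Y'_i)⁻¹` and `e'_{ij}` (`i ≠ j`) map the space `P^{(d)}` of
homogeneous polynomials of degree `d` into itself, and the only invariant `F`-subspaces
`V ⊆ P^{(d)}` are `{0}` and `P^{(d)}`. -/
theorem statement15
    (n : ℕ) [NeZero n]
    (q₀ : ℂ) (hq₀ : q₀ ≠ 0) (hq₀root : ∀ m : ℕ, m ≠ 0 → q₀ ^ m ≠ 1)
    -- the action of the symmetric group permuting the variables
    (W : Equiv.Perm (Fin n) → Module.End (RatFunc ℂ) (Laur (RatFunc ℂ) n))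
    (hW : ∀ (w : Equiv.Perm (Fin n)) (v : Fin n →₀ ℤ) (r : (RatFunc ℂ)),
      W w (mono v r) = mono (Finsupp.equivMapDomain w v) r)
    -- the Demazure–Lusztig operators `T_k` and their inverses `Ti k = T k + τ⁻¹ - τ`
    (T Ti : ℕ → Module.End (RatFunc ℂ) (Laur (RatFunc ℂ) n))
    (hT : ∀ (k : ℕ) (hk : k + 1 < n) (p : Laur (RatFunc ℂ) n),
      (Xel ⟨k + 1, hk⟩ - Xel ⟨k, Nat.lt_of_succ_lt hk⟩) * T k p
        = ((RatFunc.X : RatFunc ℂ)⁻¹ • Xel ⟨k + 1, hk⟩ - (RatFunc.X : RatFunc ℂ) • Xel ⟨k, Nat.lt_of_succ_lt hk⟩)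
            * W (Equiv.swap ⟨k, Nat.lt_of_succ_lt hk⟩ ⟨k + 1, hk⟩) p
          + ((RatFunc.X : RatFunc ℂ) - (RatFunc.X : RatFunc ℂ)⁻¹) • (Xel ⟨k + 1, hk⟩ * p))
    (hTi : ∀ k, Ti k = T k + ((RatFunc.X : RatFunc ℂ)⁻¹ - (RatFunc.X : RatFunc ℂ)) • (1 : Module.End (RatFunc ℂ) (Laur (RatFunc ℂ) n)))
    (hTinv : ∀ k, k + 1 < n → T k * Ti k = 1 ∧ Ti k * T k = 1)
    -- the operator `π⁻¹`
    (piInv : Module.End (RatFunc ℂ) (Laur (RatFunc ℂ) n))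
    (hpiInv : ∀ (v : Fin n →₀ ℤ) (r : (RatFunc ℂ)),
      piInv (mono v r)
        = (algebraMap ℂ (RatFunc ℂ) q₀) ^ (v 0) • mono (Finsupp.equivMapDomain (finRotate n).symm v) r)
    -- the operators `Y_i = T_i ⋯ T_{n-1} ⬝ π⁻¹ ⬝ T_1⁻¹ ⋯ T_{i-1}⁻¹` and their inverses
    (Y Yi : ℕ → Module.End (RatFunc ℂ) (Laur (RatFunc ℂ) n))
    (hY : ∀ i, Y i = aF T i (n - 1 - i) * piInv * aF Ti 0 i)
    (hYinv : ∀ i, i < n → Y i * Yi i = 1 ∧ Yi i * Y i = 1)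
    -- the renormalised operators `Y'_i = τ^{n-1} Y_i`, their inverses, and `D'_i`
    (Y' Y'i : ℕ → Module.End (RatFunc ℂ) (Laur (RatFunc ℂ) n))
    (hY' : ∀ i, Y' i = (RatFunc.X : RatFunc ℂ) ^ (n - 1) • Y i)
    (hY'inv : ∀ i, i < n → Y' i * Y'i i = 1 ∧ Y'i i * Y' i = 1)
    (D' : ℕ → Module.End (RatFunc ℂ) (Laur (RatFunc ℂ) n))
    (hD' : ∀ i, D' i = aF T i (n - 1 - i)
        * ((((algebraMap ℂ (RatFunc ℂ) q₀)) - ((algebraMap ℂ (RatFunc ℂ) q₀))⁻¹)⁻¹ •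
            (XinvOp (n - 1) * (Y' (n - 1) - Y'i (n - 1))))
        * dF T i (n - 1 - i))
    -- the operators `e'_{ij} = X_i · D'_j`
    (e' : ℕ → ℕ → Module.End (RatFunc ℂ) (Laur (RatFunc ℂ) n))
    (he' : ∀ i j, e' i j = XOp i * D' j)
    :
    ∀ d : ℕ,
      ((∀ k : ℕ, k + 1 < n →
          ∀ p ∈ degSub (RatFunc ℂ) n d, T k p ∈ degSub (RatFunc ℂ) n d) ∧
       (∀ i : ℕ, i < n → ∀ p ∈ degSub (RatFunc ℂ) n d,
          Y' i p ∈ degSub (RatFunc ℂ) n d ∧ Y'i i p ∈ degSub (RatFunc ℂ) n d) ∧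
       (∀ i j : ℕ, i < n → j < n → i ≠ j →
          ∀ p ∈ degSub (RatFunc ℂ) n d, e' i j p ∈ degSub (RatFunc ℂ) n d)) ∧
      (∀ V : Submodule (RatFunc ℂ) (Laur (RatFunc ℂ) n), V ≤ degSub (RatFunc ℂ) n d →
        (∀ k : ℕ, k + 1 < n → ∀ p ∈ V, T k p ∈ V) →
        (∀ i : ℕ, i < n → ∀ p ∈ V, Y' i p ∈ V ∧ Y'i i p ∈ V) →
        (∀ i j : ℕ, i < n → j < n → i ≠ j → ∀ p ∈ V, e' i j p ∈ V) →
        V = ⊥ ∨ V = degSub (RatFunc ℂ) n d) := by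
  intro d
  obtain rfl := eq_permOp hW
  obtain rfl := eq_cyclicShift hpiInv
  obtain rfl : Ti = dlInv RatFunc.X T := funext hTi
  obtain rfl : Y' = cherednik RatFunc.X (algebraMap ℂ (RatFunc ℂ) q₀) T :=
    funext fun i => by rw [hY', hY, cherednik]
  obtain rfl : D' = qDunkl RatFunc.X (algebraMap ℂ (RatFunc ℂ) q₀) T Y'i := funext hD'
  obtain rfl := funext₂ he'
  have ht : (pointPrime (1 : ℂ)).valuation (RatFunc ℂ) (RatFunc.X - 1) < 1 := by
    simpa using pointPrime_valuation_X_sub_C_lt_one (1 : ℂ)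
  have hroot (m : ℕ) (hm : m ≠ 0) :
      (pointPrime (1 : ℂ)).valuation (RatFunc ℂ) (algebraMap ℂ (RatFunc ℂ) q₀ ^ m - 1) = 1 := by
    simpa using pointPrime_valuation_algebraMap (1 : ℂ) (sub_ne_zero.mpr (hq₀root m hm))
  obtain ⟨⟨hTd, hYd, hed⟩, hirr⟩ :=
    statement15_general ht (pointPrime_valuation_algebraMap 1 hq₀) hroot hT hY'inv d
  exact ⟨⟨hTd, fun i hi p hp => ⟨(hYd i hi).1 p hp, (hYd i hi).2 p hp⟩,
    fun i j hi hj _ => hed i j hi hj⟩,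
    fun V hV _ hYV heV => hirr V hV (fun i hi p hp => (hYV i hi p hp).1) heV⟩
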